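/- arXiv:1102.4020 — 2 statements merged into one kernel-verified Lean document; each statement's English description precedes it below -/
import Mathlib

section
/- Let u be a monotone traveling wave solution of the balanced Allen-Cahn equation in the plane, and let Γ := {(x,y) ∈ ℝ² : u(x,y) = 0} be its zero level set. Then there exist constants C > 0 and ν > 0 such that for all (x,y) ∈ ℝ², |u(x,y)² − 1| + |∇u(x,y)| + |∇²u(x,y)| ≤ C e^{−ν · dist((x,y), Γ)}, where dist denotes the Euclidean distance to Γ. -/
open Real Filter MeasureTheory Metric

noncomputable def pdx (u : ℝ → ℝ → ℝ) (x y : ℝ) : ℝ := deriv (fun t => u t y) x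

noncomputable def pdy (u : ℝ → ℝ → ℝ) (x y : ℝ) : ℝ := deriv (fun t => u x t) y

noncomputable def pdxx (u : ℝ → ℝ → ℝ) (x y : ℝ) : ℝ := deriv (fun t => pdx u t y) x

noncomputable def pdyy (u : ℝ → ℝ → ℝ) (x y : ℝ) : ℝ := deriv (fun t => pdy u x t) y

/-- `F` is a balanced double-well potential. -/
def BalancedDoubleWell (F : ℝ → ℝ) : Prop :=
  ContDiff ℝ 3 F ∧ deriv F (-1) = 0 ∧ deriv F 1 = 0 ∧
  0 < deriv (deriv F) (-1) ∧ 0 < deriv (deriv F) 1 ∧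
  (∀ s ∈ Set.Ioo (-1 : ℝ) 0, 0 < deriv F s) ∧
  (∀ s ∈ Set.Ioo (0 : ℝ) 1, deriv F s < 0) ∧
  F (-1) = 0 ∧ F 1 = 0

/-- `u` is a `C³` solution of `Δu + c uᵧ = F'(u)` on `ℝ²` with `|u| ≤ 1`
which is monotone in `y`. -/
def IsSolution (F : ℝ → ℝ) (c : ℝ) (u : ℝ → ℝ → ℝ) : Prop :=
  ContDiff ℝ 3 (fun p : ℝ × ℝ => u p.1 p.2) ∧
  (∀ x y : ℝ, pdxx u x y + pdyy u x y + c * pdy u x y = deriv F (u x y)) ∧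
  (∀ x y : ℝ, |u x y| ≤ 1) ∧
  (∀ x y : ℝ, 0 < pdy u x y)

/-- A monotone traveling wave solution connecting `-1` to `1`. -/
def IsTravelingWave (F : ℝ → ℝ) (c : ℝ) (u : ℝ → ℝ → ℝ) : Prop :=
  IsSolution F c u ∧
  (∀ x : ℝ, Tendsto (fun y => u x y) atTop (nhds 1)) ∧
  (∀ x : ℝ, Tendsto (fun y => u x y) atBot (nhds (-1)))

/-- `gx, gy, gxx, gyy` are the pure first and second partial derivatives of the continuous
function `g`. -/
structure HasPartials (g gx gy gxx gyy : ℝ → ℝ → ℝ) : Prop where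
  cont : Continuous fun p : ℝ × ℝ => g p.1 p.2
  dx : ∀ x y, HasDerivAt (fun t => g t y) (gx x y) x
  dy : ∀ x y, HasDerivAt (fun t => g x t) (gy x y) y
  dxx : ∀ x y, HasDerivAt (fun t => gx t y) (gxx x y) x
  dyy : ∀ x y, HasDerivAt (fun t => gy x t) (gyy x y) y

theorem IsLocalMax.second_deriv_nonpos {f f' : ℝ → ℝ} {a f'' : ℝ}
    (h : ∀ t, HasDerivAt f (f' t) t) (h' : HasDerivAt f' f'' a) (hm : IsLocalMax f a) :
    f' a = 0 ∧ f'' ≤ 0 := by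
  have h0 : f' a = 0 := hm.hasDerivAt_eq_zero (h a)
  refine ⟨h0, ?_⟩
  by_contra! hpos
  have hd : deriv f = f' := funext fun t => (h t).deriv
  have hmin : IsLocalMin f a :=
    isLocalMin_of_deriv_deriv_pos (by rw [hd, h'.deriv]; exact hpos) (by rw [hd, h0])
      (h a).continuousAt
  have hconst : f =ᶠ[nhds a] fun _ => f a := by
    filter_upwards [hm, hmin] with t h1 h2 using le_antisymm h1 h2
  have hd0 : f' =ᶠ[nhds a] fun _ => 0 := by
    filter_upwards [hconst.deriv] with t ht
    rw [← hd, ht]; simp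
  have := hd0.deriv_eq
  rw [h'.deriv] at this
  simp at this
  linarith

namespace HasPartials

variable {g gx gy gxx gyy : ℝ → ℝ → ℝ}

/-- Weak maximum principle on a rectangle for the operator `Δ + c ∂y`. -/
theorem nonpos_of_boundary (h : HasPartials g gx gy gxx gyy) {c a b a' b' : ℝ}
    (hbd : ∀ x ∈ Set.Icc a b, ∀ y ∈ Set.Icc a' b',
      (x = a ∨ x = b ∨ y = a' ∨ y = b') → g x y ≤ 0)
    (hlap : ∀ x ∈ Set.Ioo a b, ∀ y ∈ Set.Ioo a' b', 0 < g x y →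
      0 < gxx x y + gyy x y + c * gy x y) :
    ∀ x ∈ Set.Icc a b, ∀ y ∈ Set.Icc a' b', g x y ≤ 0 := by
  intro x hx y hy
  obtain ⟨⟨p, q⟩, hpq, hmax⟩ := (isCompact_Icc.prod isCompact_Icc).exists_isMaxOn
    (s := Set.Icc a b ×ˢ Set.Icc a' b') ⟨(x, y), hx, hy⟩ h.cont.continuousOn
  have hle : ∀ s ∈ Set.Icc a b, ∀ t ∈ Set.Icc a' b', g s t ≤ g p q := fun s hs t ht =>
    hmax (Set.mk_mem_prod hs ht)
  obtain ⟨hp, hq⟩ := hpq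
  simp only at hp hq
  refine (hle x hx y hy).trans ?_
  by_contra! hpos
  by_cases hB : p = a ∨ p = b ∨ q = a' ∨ q = b'
  · exact absurd (hbd p hp q hq hB) (not_le.2 hpos)
  push Not at hB
  have hp' : p ∈ Set.Ioo a b :=
    ⟨lt_of_le_of_ne hp.1 (Ne.symm hB.1), lt_of_le_of_ne hp.2 hB.2.1⟩
  have hq' : q ∈ Set.Ioo a' b' :=
    ⟨lt_of_le_of_ne hq.1 (Ne.symm hB.2.2.1), lt_of_le_of_ne hq.2 hB.2.2.2⟩
  have h1 : IsLocalMax (fun t => g t q) p := by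
    filter_upwards [isOpen_Ioo.mem_nhds hp'] with t ht
    exact hle t (Set.Ioo_subset_Icc_self ht) q hq
  have h2 : IsLocalMax (fun t => g p t) q := by
    filter_upwards [isOpen_Ioo.mem_nhds hq'] with t ht
    exact hle p hp t (Set.Ioo_subset_Icc_self ht)
  have e1 := h1.second_deriv_nonpos (fun t => h.dx t q) (h.dxx p q)
  have e2 := h2.second_deriv_nonpos (fun t => h.dy p t) (h.dyy p q)
  have := hlap p hp' q hq' hpos
  rw [e2.1] at this
  linarith [e1.2, e2.2]

theorem neg (h : HasPartials g gx gy gxx gyy) :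
    HasPartials (fun x y => -g x y) (fun x y => -gx x y) (fun x y => -gy x y)
      (fun x y => -gxx x y) (fun x y => -gyy x y) :=
  ⟨h.cont.neg, fun x y => (h.dx x y).neg, fun x y => (h.dy x y).neg,
    fun x y => (h.dxx x y).neg, fun x y => (h.dyy x y).neg⟩

theorem sub_const (h : HasPartials g gx gy gxx gyy) (a : ℝ) :
    HasPartials (fun x y => g x y - a) gx gy gxx gyy :=
  ⟨h.cont.sub continuous_const, fun x y => (h.dx x y).sub_const a,
    fun x y => (h.dy x y).sub_const a, h.dxx, h.dyy⟩

theorem swap (h : HasPartials g gx gy gxx gyy) :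
    HasPartials (fun x y => g y x) (fun x y => gy y x) (fun x y => gx y x)
      (fun x y => gyy y x) (fun x y => gxx y x) :=
  ⟨h.cont.comp continuous_swap, fun x y => h.dy y x, fun x y => h.dx y x,
    fun x y => h.dyy y x, fun x y => h.dxx y x⟩

/-- The reflection `g ↦ -g(x, -y)`. -/
theorem reflect (h : HasPartials g gx gy gxx gyy) :
    HasPartials (fun x y => -g x (-y)) (fun x y => -gx x (-y)) (fun x y => gy x (-y))
      (fun x y => -gxx x (-y)) (fun x y => -gyy x (-y)) := by
  refine ⟨(h.cont.comp (continuous_fst.prodMk continuous_snd.neg)).neg,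
    fun x y => (h.dx x (-y)).neg, fun x y => ?_, fun x y => (h.dxx x (-y)).neg, fun x y => ?_⟩
  · exact (((h.dy x (-y)).comp y (hasDerivAt_neg y)).neg).congr_deriv (by ring)
  · exact ((h.dyy x (-y)).comp y (hasDerivAt_neg y)).congr_deriv (by ring)

/-- One-sided interior gradient estimate for Poisson's equation on the unit square, by comparison
of the odd part of `g` with a quadratic barrier. -/
theorem gx_zero_le (h : HasPartials g gx gy gxx gyy) {M N : ℝ}
    (hM : ∀ x y, |x| ≤ 1 → |y| ≤ 1 → |g x y| ≤ M)
    (hN : ∀ x y, |x| ≤ 1 → |y| ≤ 1 → |gxx x y + gyy x y| ≤ N) :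
    gx 0 0 ≤ 2 * M + N / 2 := by
  refine le_of_forall_pos_le_add fun ε hε => ?_
  set N' := N + 2 * ε with hN'
  have hM0 : 0 ≤ M := (abs_nonneg _).trans (hM 0 0 (by simp) (by simp))
  have hN0 : 0 ≤ N := (abs_nonneg _).trans (hN 0 0 (by simp) (by simp))
  have hP : HasPartials
      (fun x y => 1 / 2 * (g x y - g (-x) y) - (M * (y ^ 2 + x * (2 - x)) + N' / 2 * (x * (1 - x))))
      (fun x y => 1 / 2 * (gx x y + gx (-x) y) - (M * (2 - 2 * x) + N' / 2 * (1 - 2 * x)))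
      (fun x y => 1 / 2 * (gy x y - gy (-x) y) - M * (2 * y))
      (fun x y => 1 / 2 * (gxx x y - gxx (-x) y) + 2 * M + N')
      (fun x y => 1 / 2 * (gyy x y - gyy (-x) y) - 2 * M) := by
    refine ⟨?_, fun x y => ?_, fun x y => ?_, fun x y => ?_, fun x y => ?_⟩
    · have h1 := h.cont
      have h2 : Continuous fun p : ℝ × ℝ => g (-p.1) p.2 :=
        h.cont.comp (continuous_fst.neg.prodMk continuous_snd)
      fun_prop
    · have h1 := h.dx x y
      have h2 := (h.dx (-x) y).comp x (hasDerivAt_neg x)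
      have h3 := hasDerivAt_id x
      refine (((h1.sub h2).const_mul (1 / 2)).sub
        ((((h3.mul (h3.const_sub 2)).const_add (y ^ 2)).const_mul M).add
          ((h3.mul (h3.const_sub 1)).const_mul (N' / 2)))).congr_deriv ?_
      simp
      ring
    · have h1 := h.dy x y
      have h2 := h.dy (-x) y
      have h3 := hasDerivAt_id y
      refine (((h1.sub h2).const_mul (1 / 2)).sub
        ((((h3.pow 2).add_const (x * (2 - x))).const_mul M).add_const
          (N' / 2 * (x * (1 - x))))).congr_deriv ?_
      simp
    · have h1 := h.dxx x y
      have h2 := (h.dxx (-x) y).comp x (hasDerivAt_neg x)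
      have h3 := hasDerivAt_id x
      refine (((h1.add h2).const_mul (1 / 2)).sub
        ((((h3.const_mul 2).const_sub 2).const_mul M).add
          (((h3.const_mul 2).const_sub 1).const_mul (N' / 2)))).congr_deriv ?_
      simp
      ring
    · have h1 := h.dyy x y
      have h2 := h.dyy (-x) y
      have h3 := hasDerivAt_id y
      refine (((h1.sub h2).const_mul (1 / 2)).sub
        ((h3.const_mul 2).const_mul M)).congr_deriv ?_
      simp
      ring
  have key := hP.nonpos_of_boundary (c := 0) (a := 0) (b := 1) (a' := -1) (b' := 1) ?_ ?_
  · by_contra! hcon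
    have hd := hP.dx 0 0
    have hpos : 0 < 1 / 2 * (gx 0 0 + gx (-0) 0) -
        (M * (2 - 2 * 0) + N' / 2 * (1 - 2 * 0)) := by
      simp only [neg_zero]
      linarith
    have hev := ((hasDerivAt_iff_tendsto_slope.1 hd).mono_left
      (nhdsGT_le_nhdsNE (0 : ℝ))).eventually (lt_mem_nhds hpos)
    obtain ⟨x, hx1, hx2⟩ := (hev.and (Ioo_mem_nhdsGT (zero_lt_one' ℝ))).exists
    have := key x ⟨hx2.1.le, hx2.2.le⟩ 0 (by norm_num)
    rw [slope_def_field] at hx1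
    have hx3 := (div_pos_iff_of_pos_right (by linarith [hx2.1])).1 hx1
    simp only [neg_zero, sub_self] at hx3 this
    linarith
  · intro x hx y hy hB
    have hx1 : |x| ≤ 1 := abs_le.2 ⟨by linarith [hx.1], hx.2⟩
    have hy1 : |y| ≤ 1 := abs_le.2 hy
    have b1 := abs_le.1 (hM x y hx1 hy1)
    have b2 := abs_le.1 (hM (-x) y (by rwa [abs_neg]) hy1)
    have hx2 : 0 ≤ x * (1 - x) := mul_nonneg hx.1 (by linarith [hx.2])
    have hx3 : 0 ≤ x * (2 - x) := mul_nonneg hx.1 (by linarith [hx.2])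
    have hN2 : 0 ≤ N' / 2 * (x * (1 - x)) := mul_nonneg (by linarith) hx2
    rcases hB with rfl | rfl | hy2
    · simp only [neg_zero]
      nlinarith [mul_nonneg hM0 (sq_nonneg y)]
    · nlinarith [mul_nonneg hM0 (sq_nonneg y)]
    · have hy3 : y ^ 2 = 1 := by rcases hy2 with rfl | rfl <;> norm_num
      rw [hy3]
      nlinarith [mul_nonneg hM0 hx3]
  · intro x hx y hy _
    have hx1 : |x| ≤ 1 := abs_le.2 ⟨by linarith [hx.1], hx.2.le⟩
    have hy1 : |y| ≤ 1 := abs_le.2 ⟨hy.1.le, hy.2.le⟩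
    have b1 := abs_le.1 (hN x y hx1 hy1)
    have b2 := abs_le.1 (hN (-x) y (by rwa [abs_neg]) hy1)
    linarith

theorem abs_gx_zero_le (h : HasPartials g gx gy gxx gyy) {M N : ℝ}
    (hM : ∀ x y, |x| ≤ 1 → |y| ≤ 1 → |g x y| ≤ M)
    (hN : ∀ x y, |x| ≤ 1 → |y| ≤ 1 → |gxx x y + gyy x y| ≤ N) :
    |gx 0 0| ≤ 2 * M + N / 2 := by
  refine abs_le'.2 ⟨h.gx_zero_le hM hN, h.neg.gx_zero_le (fun x y hx hy => ?_)
    fun x y hx hy => ?_⟩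
  · rw [abs_neg]; exact hM x y hx hy
  · rw [← neg_add, abs_neg]; exact hN x y hx hy

end HasPartials

/-- The constant of the interior gradient estimate for `Δ + c ∂y` on unit squares. -/
noncomputable def gradConst (c : ℝ) : ℝ := Real.exp (|c| / 2) * (3 + c ^ 2) + |c|

theorem gradConst_pos (c : ℝ) : 0 < gradConst c := by unfold gradConst; positivity

/-- Interior gradient estimate for `Δ + c ∂y`; the drift is removed by the substitution
`w = exp (c y / 2) g`. -/
theorem HasPartials.grad_le {g gx gy gxx gyy : ℝ → ℝ → ℝ} (h : HasPartials g gx gy gxx gyy)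
    {c M N x₀ y₀ : ℝ} (hM : ∀ x y, |x - x₀| ≤ 1 → |y - y₀| ≤ 1 → |g x y| ≤ M)
    (hN : ∀ x y, |x - x₀| ≤ 1 → |y - y₀| ≤ 1 → |gxx x y + gyy x y + c * gy x y| ≤ N) :
    |gx x₀ y₀| ≤ gradConst c * (M + N) ∧ |gy x₀ y₀| ≤ gradConst c * (M + N) := by
  have hM0 : 0 ≤ M := (abs_nonneg _).trans (hM x₀ y₀ (by simp) (by simp))
  have hN0 : 0 ≤ N := (abs_nonneg _).trans (hN x₀ y₀ (by simp) (by simp))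
  have hexp : ∀ y, HasDerivAt (fun t => Real.exp (c / 2 * t)) (c / 2 * Real.exp (c / 2 * y)) y := by
    intro y
    refine ((hasDerivAt_id y).const_mul (c / 2)).exp.congr_deriv ?_
    simp only [id]; ring
  have hP : HasPartials (fun x y => Real.exp (c / 2 * y) * g (x₀ + x) (y₀ + y))
      (fun x y => Real.exp (c / 2 * y) * gx (x₀ + x) (y₀ + y))
      (fun x y => Real.exp (c / 2 * y) * (c / 2 * g (x₀ + x) (y₀ + y) + gy (x₀ + x) (y₀ + y)))
      (fun x y => Real.exp (c / 2 * y) * gxx (x₀ + x) (y₀ + y))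
      (fun x y => Real.exp (c / 2 * y) * (c ^ 2 / 4 * g (x₀ + x) (y₀ + y) +
        c * gy (x₀ + x) (y₀ + y) + gyy (x₀ + x) (y₀ + y))) := by
    refine ⟨?_, fun x y => ?_, fun x y => ?_, fun x y => ?_, fun x y => ?_⟩
    · have h2 : Continuous fun p : ℝ × ℝ => g (x₀ + p.1) (y₀ + p.2) :=
        h.cont.comp ((continuous_const.add continuous_fst).prodMk
          (continuous_const.add continuous_snd))
      exact (Real.continuous_exp.comp (continuous_const.mul continuous_snd)).mul h2
    · exact ((h.dx (x₀ + x) (y₀ + y)).comp_const_add x₀ x).const_mul _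
    · refine ((hexp y).mul ((h.dy (x₀ + x) (y₀ + y)).comp_const_add y₀ y)).congr_deriv ?_
      ring
    · exact ((h.dxx (x₀ + x) (y₀ + y)).comp_const_add x₀ x).const_mul _
    · refine ((hexp y).mul ((((h.dy (x₀ + x) (y₀ + y)).comp_const_add y₀ y).const_mul (c / 2)).add
        ((h.dyy (x₀ + x) (y₀ + y)).comp_const_add y₀ y))).congr_deriv ?_
      simp only [Pi.add_apply]
      ring
  set E := Real.exp (|c| / 2) with hE
  have hE0 : 0 < E := Real.exp_pos _
  have hEle : ∀ y : ℝ, |y| ≤ 1 → Real.exp (c / 2 * y) ≤ E := fun y hy => by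
    refine Real.exp_le_exp.2 ((le_abs_self _).trans ?_)
    rw [abs_mul, abs_div, abs_two]
    exact mul_le_of_le_one_right (by positivity) hy
  have hwM : ∀ x y, |x| ≤ 1 → |y| ≤ 1 →
      |Real.exp (c / 2 * y) * g (x₀ + x) (y₀ + y)| ≤ E * M := fun x y hx hy => by
    rw [abs_mul, Real.abs_exp]
    exact mul_le_mul (hEle y hy) (hM _ _ (by simpa) (by simpa)) (abs_nonneg _) hE0.le
  have hwN : ∀ x y, |x| ≤ 1 → |y| ≤ 1 →
      |Real.exp (c / 2 * y) * gxx (x₀ + x) (y₀ + y) +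
        Real.exp (c / 2 * y) * (c ^ 2 / 4 * g (x₀ + x) (y₀ + y) +
        c * gy (x₀ + x) (y₀ + y) + gyy (x₀ + x) (y₀ + y))| ≤ E * (N + c ^ 2 / 4 * M) := by
    intro x y hx hy
    have e1 := hM (x₀ + x) (y₀ + y) (by simpa) (by simpa)
    have e2 := hN (x₀ + x) (y₀ + y) (by simpa) (by simpa)
    rw [← mul_add, abs_mul, Real.abs_exp]
    refine mul_le_mul (hEle y hy) ?_ (abs_nonneg _) hE0.le
    have : |c ^ 2 / 4 * g (x₀ + x) (y₀ + y)| ≤ c ^ 2 / 4 * M := by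
      rw [abs_mul, abs_of_nonneg (by positivity : 0 ≤ c ^ 2 / 4)]
      gcongr
    calc _ = |(gxx (x₀ + x) (y₀ + y) + gyy (x₀ + x) (y₀ + y) + c * gy (x₀ + x) (y₀ + y)) +
          c ^ 2 / 4 * g (x₀ + x) (y₀ + y)| := by ring_nf
      _ ≤ _ := (abs_add_le _ _).trans (add_le_add e2 this)
  have r1 := hP.abs_gx_zero_le hwM hwN
  have r2 := hP.swap.abs_gx_zero_le (fun x y hx hy => hwM y x hy hx)
    (fun x y hx hy => by rw [add_comm]; exact hwN y x hy hx)
  simp only [mul_zero, Real.exp_zero, add_zero, one_mul] at r1 r2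
  have hsum : 2 * (E * M) + E * (N + c ^ 2 / 4 * M) / 2 + |c| / 2 * M ≤ gradConst c * (M + N) := by
    unfold gradConst
    rw [← hE]
    have q1 := mul_nonneg hE0.le hM0
    have q2 := mul_nonneg hE0.le hN0
    have q3 := mul_nonneg q1 (sq_nonneg c)
    have q4 := mul_nonneg q2 (sq_nonneg c)
    have q5 := mul_nonneg (abs_nonneg c) hM0
    have q6 := mul_nonneg (abs_nonneg c) hN0
    nlinarith
  have hcM : 0 ≤ |c| / 2 * M := by positivity
  refine ⟨by linarith, ?_⟩
  have e3 : |c / 2 * g x₀ y₀| ≤ |c| / 2 * M := by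
    rw [abs_mul, abs_div, abs_two]
    gcongr
    exact hM _ _ (by simp) (by simp)
  have e4 := abs_sub (c / 2 * g x₀ y₀ + gy x₀ y₀) (c / 2 * g x₀ y₀)
  rw [add_sub_cancel_left] at e4
  linarith

theorem abs_sinh_le_cosh (x : ℝ) : |Real.sinh x| ≤ Real.cosh x := by
  rw [Real.sinh_eq, Real.cosh_eq, abs_le]
  constructor <;> linarith [Real.exp_pos x, Real.exp_pos (-x)]

theorem mul_le_sub_of_le_hasDerivAt {v v' : ℝ → ℝ} {a b k : ℝ} (hab : a ≤ b)
    (hv : ∀ t, HasDerivAt v (v' t) t) (hk : ∀ t ∈ Set.Ioo a b, k ≤ v' t) :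
    k * (b - a) ≤ v b - v a := by
  rcases hab.eq_or_lt with rfl | hab
  · simp
  obtain ⟨t, ht, he⟩ := exists_hasDerivAt_eq_slope v v' hab
    (fun t _ => (hv t).continuousAt.continuousWithinAt) (fun t _ => hv t)
  have := hk t ht
  rw [he, le_div_iff₀ (by linarith)] at this
  exact this

/-- A function which starts nondecreasing, is uniformly convex on `[0, τ]` and almost convex
afterwards grows by at least `2`. -/
theorem add_two_le_of_convex_start {v v' v'' : ℝ → ℝ} {m τ ε R : ℝ}
    (hv : ∀ t, HasDerivAt v (v' t) t) (hv' : ∀ t, HasDerivAt v' (v'' t) t) (h0 : 0 ≤ v' 0)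
    (hm : 0 < m) (hτ : 0 < τ) (hR : R = τ + 8 / (m * τ)) (hε : 0 ≤ ε) (hεm : ε ≤ m / 2)
    (hεR : ε * R ≤ m * τ / 4) (hnear : ∀ t ∈ Set.Icc 0 τ, m ≤ v'' t + ε)
    (hfar : ∀ t ∈ Set.Icc 0 R, -ε ≤ v'' t) : v τ + 2 ≤ v R := by
  have hτR : τ ≤ R := by rw [hR]; linarith [show 0 < 8 / (m * τ) by positivity]
  have h1 := mul_le_sub_of_le_hasDerivAt (k := m / 2) hτ.le hv'
    fun t ht => by linarith [hnear t ⟨ht.1.le, ht.2.le⟩]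
  have h2 : ∀ t ∈ Set.Ioo τ R, m * τ / 4 ≤ v' t := by
    intro t ht
    have := mul_le_sub_of_le_hasDerivAt (k := -ε) ht.1.le hv'
      fun s hs => hfar s ⟨by linarith [hs.1], by linarith [hs.2, ht.2]⟩
    have h3 : ε * (t - τ) ≤ ε * R := mul_le_mul_of_nonneg_left (by linarith [ht.2]) hε
    linarith
  have h3 := mul_le_sub_of_le_hasDerivAt hτR hv h2
  rw [hR, add_sub_cancel_left, ← hR] at h3
  have : m * τ / 4 * (8 / (m * τ)) = 2 := by field_simp; norm_num
  linarith

/-- A solution of `Δu + c uᵧ = f(u)` which is increasing in `y`, tends to `-1` as `y → -∞`, and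
whose `y`-derivatives vanish at infinity. -/
structure VanishingWave (f : ℝ → ℝ) (c : ℝ) (u ux uy uxx uyy : ℝ → ℝ → ℝ) : Prop where
  partials : HasPartials u ux uy uxx uyy
  pde : ∀ x y, uxx x y + uyy x y + c * uy x y = f (u x y)
  neg_one_le : ∀ x y, -1 ≤ u x y
  mono : ∀ x, Monotone (u x)
  lim_bot : ∀ x, Tendsto (u x) atBot (nhds (-1))
  zero : ∃ q : ℝ × ℝ, u q.1 q.2 = 0
  ux_bdd : ∃ B, ∀ x y, |ux x y| ≤ B
  vanish : ∀ ε > 0, ∃ R, ∀ x y, R ≤ ‖(x, y)‖ → |uy x y| ≤ ε ∧ |uyy x y| ≤ ε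

namespace VanishingWave

variable {f : ℝ → ℝ} {c : ℝ} {u ux uy uxx uyy : ℝ → ℝ → ℝ}

theorem neg_of_mem_ball (hu : Continuous fun p : ℝ × ℝ => u p.1 p.2) {p q : ℝ × ℝ} {r : ℝ}
    (hp : u p.1 p.2 < 0) (hr : r ≤ infDist p {q : ℝ × ℝ | u q.1 q.2 = 0}) (hq : q ∈ ball p r) :
    u q.1 q.2 < 0 := by
  by_contra! hq0
  have hpr : p ∈ ball p r := mem_ball_self (pos_of_mem_ball hq)
  obtain ⟨z, hz, hz0⟩ := (convex_ball p r).isPreconnected.intermediate_value hpr hq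
    hu.continuousOn ⟨hp.le, hq0⟩
  have h1 := infDist_le_dist_of_mem (x := p) (s := {q : ℝ × ℝ | u q.1 q.2 = 0}) hz0
  have h2 := mem_ball'.1 hz
  linarith

/-- Far from the zero level set, on its negative side, the wave is close to `-1`. -/
theorem exists_le_of_far (w : VanishingWave f c u ux uy uxx uyy) (hf : Continuous f)
    (hf1 : f (-1) = 0) (hfpos : ∀ s ∈ Set.Ioo (-1 : ℝ) 0, 0 < f s) {δ : ℝ} (hδ0 : 0 < δ)
    (hδ1 : δ < 1) :
    ∃ R > 0, ∀ p : ℝ × ℝ, u p.1 p.2 < 0 → R ≤ infDist p {q : ℝ × ℝ | u q.1 q.2 = 0} →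
      u p.1 p.2 ≤ -1 + δ := by
  obtain ⟨q₀, hq₀⟩ := w.zero
  obtain ⟨B, hB⟩ := w.ux_bdd
  have hB0 : 0 ≤ B := (abs_nonneg _).trans (hB 0 0)
  set s := -1 + δ with hs
  set m := f s / 2 with hm
  have hfs : 0 < f s := hfpos s ⟨by linarith, by linarith⟩
  have hm0 : 0 < m := by positivity
  obtain ⟨η, hη, hnear⟩ := Metric.eventually_nhds_iff.1
    (hf.continuousAt.eventually (lt_mem_nhds (show m < f s by linarith)))
  set τ := η / (2 * (B + 1)) with hτ
  have hτ0 : 0 < τ := by positivity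
  have hBτ : B * τ < η := by
    have : (B + 1) * τ = η / 2 := by rw [hτ]; field_simp
    nlinarith
  set T := τ + 8 / (m * τ) with hT
  have hT0 : 0 < T := by positivity
  have hτT : τ ≤ T := by rw [hT]; linarith [show 0 < 8 / (m * τ) by positivity]
  set ε := min (m / 2) (m * τ / (4 * T)) with hε
  have hε0 : 0 < ε := by positivity
  have hεT : ε * T ≤ m * τ / 4 := by
    calc ε * T ≤ m * τ / (4 * T) * T := by gcongr; exact min_le_right _ _
      _ = m * τ / 4 := by field_simp
  obtain ⟨R₁, hR₁⟩ := w.vanish (ε / (1 + |c|)) (by positivity)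
  set R := max (R₁ + ‖q₀‖ + T) 0 + T + 1 with hR
  have hRT : T < R := by rw [hR]; linarith [le_max_right (R₁ + ‖q₀‖ + T) 0]
  refine ⟨R, by linarith, fun p hp hpd => ?_⟩
  by_contra! hcon
  obtain ⟨y, hy, hys⟩ : ∃ y ≤ p.2, u p.1 y = s := by
    obtain ⟨z, hz1, hz2⟩ := (((w.lim_bot p.1).eventually
      (gt_mem_nhds (show (-1 : ℝ) < s by linarith))).and (eventually_le_atBot p.2)).exists
    have hc : Continuous (u p.1) := continuous_iff_continuousAt.2
      fun y => (w.partials.dy p.1 y).continuousAt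
    obtain ⟨y, hy, hys⟩ := intermediate_value_Icc hz2 hc.continuousOn ⟨hz1.le, hcon.le⟩
    exact ⟨y, hy.2, hys⟩
  have hneg : ∀ q ∈ ball (p.1, y) R, u q.1 q.2 < 0 := by
    intro q hq
    have hq' : (q.1, q.2 + (p.2 - y)) ∈ ball p R := by
      rw [mem_ball, Prod.dist_eq] at hq ⊢
      simpa [Real.dist_eq, show q.2 + (p.2 - y) - p.2 = q.2 - y by ring] using hq
    have hlt := neg_of_mem_ball w.partials.cont hp hpd hq'
    exact (w.mono q.1 (by linarith)).trans_lt hlt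
  have hfar : ∀ t, |t| ≤ T → R₁ ≤ ‖(p.1 + t, y)‖ := by
    intro t ht
    have h1 : R ≤ dist q₀ (p.1, y) := by
      by_contra! h
      exact absurd (hneg q₀ h) (by rw [hq₀]; exact lt_irrefl _)
    have h2 : dist (p.1 + t, y) (p.1, y) ≤ T := by
      rw [Prod.dist_eq]; simpa [Real.dist_eq] using ht
    have h3 := dist_triangle q₀ (p.1 + t, y) (p.1, y)
    have h4 := dist_le_norm_add_norm q₀ (p.1 + t, y)
    have h5 := le_max_left (R₁ + ‖q₀‖ + T) 0
    linarith
  have hlow : ∀ t, |t| ≤ T → f (u (p.1 + t) y) ≤ uxx (p.1 + t) y + ε := by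
    intro t ht
    obtain ⟨h1, h2⟩ := hR₁ _ _ (hfar t ht)
    have h3 : |uyy (p.1 + t) y + c * uy (p.1 + t) y| ≤ ε := by
      refine (abs_add_le _ _).trans ?_
      rw [abs_mul]
      calc _ ≤ ε / (1 + |c|) + |c| * (ε / (1 + |c|)) := by gcongr
        _ = ε := by field_simp
    linarith [w.pde (p.1 + t) y, (abs_le.1 h3).2]
  have hrange : ∀ t, |t| ≤ T → u (p.1 + t) y < 0 := by
    intro t ht
    refine hneg (p.1 + t, y) ?_
    rw [mem_ball, Prod.dist_eq]
    simpa [Real.dist_eq, hT0.trans hRT] using ht.trans_lt hRT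
  have hconv : ∀ t, |t| ≤ T → -ε ≤ uxx (p.1 + t) y := by
    intro t ht
    have h0 : 0 ≤ f (u (p.1 + t) y) := by
      rcases (w.neg_one_le (p.1 + t) y).eq_or_lt with h | h
      · rw [← h, hf1]
      · exact (hfpos _ ⟨h, hrange t ht⟩).le
    linarith [hlow t ht]
  have hstart : ∀ t, |t| ≤ τ → m ≤ uxx (p.1 + t) y + ε := by
    intro t ht
    refine (le_of_lt (hnear ?_)).trans (hlow t (ht.trans hτT))
    rw [← hys, dist_eq_norm]
    have := Convex.norm_image_sub_le_of_norm_hasDerivWithin_le (s := Set.univ)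
      (f := fun t => u t y) (f' := fun t => ux t y) (C := B) (x := p.1) (y := p.1 + t)
      (fun x _ => (w.partials.dx x y).hasDerivWithinAt) (fun x _ => hB x y) convex_univ
      trivial trivial
    refine this.trans_lt ?_
    rw [add_sub_cancel_left, Real.norm_eq_abs]
    exact (mul_le_mul_of_nonneg_left ht hB0).trans_lt hBτ
  have habs : ∀ {t b : ℝ}, t ∈ Set.Icc 0 b → |t| ≤ b := fun ht => by
    rw [abs_of_nonneg ht.1]; exact ht.2
  rcases le_total 0 (ux p.1 y) with h0 | h0
  · have := add_two_le_of_convex_start (v := fun t => u (p.1 + t) y)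
      (v' := fun t => ux (p.1 + t) y) (v'' := fun t => uxx (p.1 + t) y)
      (fun t => (w.partials.dx (p.1 + t) y).comp_const_add p.1 t)
      (fun t => (w.partials.dxx (p.1 + t) y).comp_const_add p.1 t)
      (by simpa using h0) hm0 hτ0 hT hε0.le (min_le_left _ _) hεT
      (fun t ht => hstart t (habs ht)) (fun t ht => hconv t (habs ht))
    linarith [w.neg_one_le (p.1 + τ) y, hrange T (abs_of_pos hT0).le]
  · have := add_two_le_of_convex_start (v := fun t => u (p.1 - t) y)
      (v' := fun t => -ux (p.1 - t) y) (v'' := fun t => uxx (p.1 - t) y)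
      (fun t => (w.partials.dx (p.1 - t) y).comp_const_sub p.1 t)
      (fun t => ((w.partials.dxx (p.1 - t) y).comp_const_sub p.1 t).neg.congr_deriv (neg_neg _))
      (by simpa using h0) hm0 hτ0 hT hε0.le (min_le_left _ _) hεT
      (fun t ht => hstart (-t) (by rw [abs_neg]; exact habs ht))
      (fun t ht => hconv (-t) (by rw [abs_neg]; exact habs ht))
    have h2 := hrange (-T) (by rw [abs_neg]; exact (abs_of_pos hT0).le)
    rw [← sub_eq_add_neg] at h2
    linarith [w.neg_one_le (p.1 - τ) y]

/-- Exponential decay of `1 + u` on the negative side of the zero level set. -/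
theorem exists_one_add_le (w : VanishingWave f c u ux uy uxx uyy) (hf : Continuous f)
    (hf1 : f (-1) = 0) {κ : ℝ} (hκ : 0 < κ) (hfd : HasDerivAt f κ (-1))
    (hfpos : ∀ s ∈ Set.Ioo (-1 : ℝ) 0, 0 < f s) :
    ∃ C > 0, ∃ ν > 0, ∀ p : ℝ × ℝ, u p.1 p.2 < 0 →
      1 + u p.1 p.2 ≤ C * Real.exp (-(ν * infDist p {q : ℝ × ℝ | u q.1 q.2 = 0})) := by
  set Γ := {q : ℝ × ℝ | u q.1 q.2 = 0} with hΓ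
  obtain ⟨δ, hδ0, hδ1, hlin⟩ : ∃ δ > 0, δ < 1 ∧ ∀ s ∈ Set.Icc 0 δ, κ / 2 * s ≤ f (-1 + s) := by
    obtain ⟨r, hr, h⟩ := Metric.eventually_nhds_iff.1
      (hfd.isLittleO.def (show 0 < κ / 2 by positivity))
    refine ⟨min (r / 2) (1 / 2), by positivity, by linarith [min_le_right (r / 2) (1 / 2)],
      fun s hs => ?_⟩
    have h1 := h (y := -1 + s) (by
      rw [Real.dist_eq, neg_add_eq_sub, sub_neg_eq_add, sub_add_cancel, abs_of_nonneg hs.1]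
      linarith [hs.2, min_le_left (r / 2) (1 / 2)])
    simp only [hf1, sub_zero, neg_add_cancel_comm, sub_neg_eq_add, Real.norm_eq_abs, smul_eq_mul,
      abs_of_nonneg hs.1] at h1
    linarith [(abs_le.1 h1).1]
  obtain ⟨R, hR0, hR⟩ := w.exists_le_of_far hf hf1 hfpos hδ0 hδ1
  set ν := min 1 (κ / 2 / (1 + |c|)) with hν
  have hν0 : 0 < ν := by positivity
  have hνκ : ν ^ 2 + |c| * ν ≤ κ / 2 := by
    have h1 : ν ≤ 1 := min_le_left _ _
    have h2 : ν * (1 + |c|) ≤ κ / 2 := by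
      rw [← le_div_iff₀ (by positivity)]; exact min_le_right _ _
    nlinarith
  refine ⟨4 * Real.exp (ν * R), by positivity, ν, hν0, fun p hp => ?_⟩
  set d := infDist p Γ with hd
  rw [mul_assoc, ← Real.exp_add, show ν * R + -(ν * d) = -(ν * (d - R)) by ring]
  rcases lt_or_ge d R with hdR | hdR
  · have : 1 ≤ Real.exp (-(ν * (d - R))) := by
      refine Real.one_le_exp ?_
      nlinarith
    linarith
  set ρ := d - R with hρ
  have hρ0 : 0 ≤ ρ := by linarith
  have hsmall : ∀ x y, |x - p.1| ≤ ρ → |y - p.2| ≤ ρ → u x y ≤ -1 + δ := by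
    intro x y hx hy
    have hdist : dist (x, y) p ≤ ρ := by
      rw [Prod.dist_eq, Real.dist_eq, Real.dist_eq]; exact max_le hx hy
    have hneg : u x y < 0 := neg_of_mem_ball (q := (x, y)) w.partials.cont hp hd.le
      (mem_ball.2 (by linarith))
    refine hR (x, y) hneg ?_
    have := infDist_le_infDist_add_dist (s := Γ) (x := p) (y := (x, y))
    rw [dist_comm] at this
    linarith
  set A := δ / Real.cosh (ν * ρ) with hA
  have hch : 0 < Real.cosh (ν * ρ) := Real.cosh_pos _
  have hA0 : 0 < A := by positivity
  have hP : HasPartials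
      (fun x y => 1 + u x y - A * (Real.cosh (ν * (x - p.1)) + Real.cosh (ν * (y - p.2))))
      (fun x y => ux x y - A * (ν * Real.sinh (ν * (x - p.1))))
      (fun x y => uy x y - A * (ν * Real.sinh (ν * (y - p.2))))
      (fun x y => uxx x y - A * (ν ^ 2 * Real.cosh (ν * (x - p.1))))
      (fun x y => uyy x y - A * (ν ^ 2 * Real.cosh (ν * (y - p.2)))) := by
    have hl : ∀ a x : ℝ, HasDerivAt (fun t => ν * (t - a)) ν x := fun a x =>
      (((hasDerivAt_id x).sub_const a).const_mul ν).congr_deriv (mul_one ν)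
    refine ⟨?_, fun x y => ?_, fun x y => ?_, fun x y => ?_, fun x y => ?_⟩
    · have := w.partials.cont
      have hcc := Real.continuous_cosh
      fun_prop
    · exact (((w.partials.dx x y).const_add 1).sub
        (((hl p.1 x).cosh.add_const _).const_mul A)).congr_deriv (by ring)
    · exact (((w.partials.dy x y).const_add 1).sub
        (((hl p.2 y).cosh.const_add _).const_mul A)).congr_deriv (by ring)
    · exact ((w.partials.dxx x y).sub
        (((hl p.1 x).sinh.const_mul ν).const_mul A)).congr_deriv (by ring)
    · exact ((w.partials.dyy x y).sub
        (((hl p.2 y).sinh.const_mul ν).const_mul A)).congr_deriv (by ring)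
  have habs : ∀ {t a : ℝ}, t ∈ Set.Icc (a - ρ) (a + ρ) → |t - a| ≤ ρ := fun ht =>
    abs_le.2 ⟨by linarith [ht.1], by linarith [ht.2]⟩
  have key := hP.nonpos_of_boundary (c := c) (a := p.1 - ρ) (b := p.1 + ρ) (a' := p.2 - ρ)
    (b' := p.2 + ρ) ?_ ?_ p.1 ⟨by linarith, by linarith⟩ p.2 ⟨by linarith, by linarith⟩
  · simp only [sub_self, mul_zero, Real.cosh_zero] at key
    have h1 : A ≤ 2 * Real.exp (-(ν * ρ)) := by
      rw [hA, div_le_iff₀ hch, Real.cosh_eq]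
      have h2 : Real.exp (-(ν * ρ)) * Real.exp (ν * ρ) = 1 := by rw [← Real.exp_add]; simp
      nlinarith [Real.exp_pos (-(ν * ρ)), Real.exp_pos (ν * ρ)]
    linarith
  · intro x hx y hy hB
    have h1 := hsmall x y (habs hx) (habs hy)
    have hx1 : 0 < Real.cosh (ν * (x - p.1)) := Real.cosh_pos _
    have hy1 : 0 < Real.cosh (ν * (y - p.2)) := Real.cosh_pos _
    have h2 : Real.cosh (ν * ρ) ≤ Real.cosh (ν * (x - p.1)) + Real.cosh (ν * (y - p.2)) := by
      rcases hB with h | h | h | h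
      · rw [h, show ν * (p.1 - ρ - p.1) = -(ν * ρ) by ring, Real.cosh_neg]; linarith
      · rw [h, show ν * (p.1 + ρ - p.1) = ν * ρ by ring]; linarith
      · rw [h, show ν * (p.2 - ρ - p.2) = -(ν * ρ) by ring, Real.cosh_neg]; linarith
      · rw [h, show ν * (p.2 + ρ - p.2) = ν * ρ by ring]; linarith
    have h3 : A * Real.cosh (ν * ρ) = δ := by rw [hA]; field_simp
    have h4 := mul_le_mul_of_nonneg_left h2 hA0.le
    linarith
  · intro x hx y hy hpos
    have h1 := hsmall x y (habs (Set.Ioo_subset_Icc_self hx)) (habs (Set.Ioo_subset_Icc_self hy))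
    have h2 := hlin (1 + u x y) ⟨by linarith [w.neg_one_le x y], by linarith⟩
    rw [neg_add_cancel_left, ← w.pde x y] at h2
    have hx1 : 0 < Real.cosh (ν * (x - p.1)) := Real.cosh_pos _
    have hy1 : 0 < Real.cosh (ν * (y - p.2)) := Real.cosh_pos _
    have h3 : c * Real.sinh (ν * (y - p.2)) ≤ |c| * Real.cosh (ν * (y - p.2)) := by
      refine (le_abs_self _).trans ?_
      rw [abs_mul]
      exact mul_le_mul_of_nonneg_left (abs_sinh_le_cosh _) (abs_nonneg c)
    set X := Real.cosh (ν * (x - p.1))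
    set Y := Real.cosh (ν * (y - p.2))
    set S := Real.sinh (ν * (y - p.2))
    have h4 : A * (ν ^ 2 * X) + A * (ν ^ 2 * Y) + c * (A * (ν * S)) ≤ κ / 2 * (A * (X + Y)) := by
      have e1 : ν ^ 2 * X + ν ^ 2 * Y + ν * (c * S) ≤ κ / 2 * (X + Y) := by
        have e2 := mul_le_mul_of_nonneg_left h3 hν0.le
        have e3 := mul_le_mul_of_nonneg_right hνκ (add_pos hx1 hy1).le
        have e4 : 0 ≤ |c| * ν * X := by positivity
        nlinarith
      have e5 := mul_le_mul_of_nonneg_left e1 hA0.le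
      nlinarith
    have h5 := mul_pos (show 0 < κ / 2 by positivity) hpos
    nlinarith

end VanishingWave

/-- The derivative of `g` in the direction `e`. -/
noncomputable def dirDeriv (e : ℝ × ℝ) (g : ℝ × ℝ → ℝ) (p : ℝ × ℝ) : ℝ := fderiv ℝ g p e

theorem ContDiff.contDiff_dirDeriv {m n : WithTop ℕ∞} {g : ℝ × ℝ → ℝ} (hg : ContDiff ℝ n g)
    (hmn : m + 1 ≤ n) (e : ℝ × ℝ) : ContDiff ℝ m (dirDeriv e g) :=
  (hg.fderiv_right hmn).clm_apply contDiff_const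

theorem dirDeriv_dirDeriv {g : ℝ × ℝ → ℝ} (hg : ContDiff ℝ 2 g) (a b p : ℝ × ℝ) :
    dirDeriv a (dirDeriv b g) p = fderiv ℝ (fderiv ℝ g) p a b := by
  have hd : DifferentiableAt ℝ (fderiv ℝ g) p :=
    (hg.fderiv_right (m := 1) (by norm_num)).differentiable (by norm_num) p
  change fderiv ℝ (fun q => fderiv ℝ g q b) p a = _
  rw [fderiv_clm_apply hd (differentiableAt_const b)]
  simp

theorem dirDeriv_comm {g : ℝ × ℝ → ℝ} (hg : ContDiff ℝ 2 g) (e e' : ℝ × ℝ) :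
    dirDeriv e (dirDeriv e' g) = dirDeriv e' (dirDeriv e g) := by
  funext p
  rw [dirDeriv_dirDeriv hg, dirDeriv_dirDeriv hg]
  exact (hg.contDiffAt.isSymmSndFDerivAt (by simp)) e e'

theorem hasDerivAt_fst_of_differentiable {g : ℝ × ℝ → ℝ} (hg : Differentiable ℝ g) (x y : ℝ) :
    HasDerivAt (fun t => g (t, y)) (dirDeriv (1, 0) g (x, y)) x :=
  (hg (x, y)).hasFDerivAt.comp_hasDerivAt x ((hasDerivAt_id x).prodMk (hasDerivAt_const x y))

theorem hasDerivAt_snd_of_differentiable {g : ℝ × ℝ → ℝ} (hg : Differentiable ℝ g) (x y : ℝ) :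
    HasDerivAt (fun t => g (x, t)) (dirDeriv (0, 1) g (x, y)) y :=
  (hg (x, y)).hasFDerivAt.comp_hasDerivAt y ((hasDerivAt_const y x).prodMk (hasDerivAt_id y))

theorem hasPartials_of_contDiff {g : ℝ × ℝ → ℝ} (hg : ContDiff ℝ 2 g) :
    HasPartials (fun x y => g (x, y)) (fun x y => dirDeriv (1, 0) g (x, y))
      (fun x y => dirDeriv (0, 1) g (x, y))
      (fun x y => dirDeriv (1, 0) (dirDeriv (1, 0) g) (x, y))
      (fun x y => dirDeriv (0, 1) (dirDeriv (0, 1) g) (x, y)) := by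
  have h0 := hg.differentiable (by norm_num)
  have h1 : ∀ e, Differentiable ℝ (dirDeriv e g) := fun e =>
    (hg.contDiff_dirDeriv (m := 1) (by norm_num) e).differentiable (by norm_num)
  exact ⟨hg.continuous, hasDerivAt_fst_of_differentiable h0, hasDerivAt_snd_of_differentiable h0,
    hasDerivAt_fst_of_differentiable (h1 _), hasDerivAt_snd_of_differentiable (h1 _)⟩

theorem norm_le_norm_add_norm_of_prod {E : Type*} [NormedAddCommGroup E] [NormedSpace ℝ E]
    (L : ℝ × ℝ →L[ℝ] E) : ‖L‖ ≤ ‖L (1, 0)‖ + ‖L (0, 1)‖ := by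
  refine L.opNorm_le_bound (by positivity) fun v => ?_
  have hv : L v = v.1 • L (1, 0) + v.2 • L (0, 1) := by
    rw [← map_smul, ← map_smul, ← map_add]
    simp
  rw [hv]
  refine (norm_add_le _ _).trans ?_
  rw [norm_smul, norm_smul, add_mul, mul_comm ‖L (1, 0)‖, mul_comm ‖L (0, 1)‖]
  gcongr
  · exact norm_fst_le v
  · exact norm_snd_le v

theorem norm_iteratedFDeriv_one_le {g : ℝ × ℝ → ℝ} (p : ℝ × ℝ) :
    ‖iteratedFDeriv ℝ 1 g p‖ ≤ |dirDeriv (1, 0) g p| + |dirDeriv (0, 1) g p| := by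
  rw [norm_iteratedFDeriv_one]
  exact norm_le_norm_add_norm_of_prod _

theorem norm_iteratedFDeriv_two_le {g : ℝ × ℝ → ℝ} (hg : ContDiff ℝ 2 g) (p : ℝ × ℝ) :
    ‖iteratedFDeriv ℝ 2 g p‖ ≤
      |dirDeriv (1, 0) (dirDeriv (1, 0) g) p| + |dirDeriv (1, 0) (dirDeriv (0, 1) g) p| +
      (|dirDeriv (0, 1) (dirDeriv (1, 0) g) p| + |dirDeriv (0, 1) (dirDeriv (0, 1) g) p|) := by
  rw [← norm_iteratedFDeriv_fderiv (n := 1), norm_iteratedFDeriv_one]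
  refine (norm_le_norm_add_norm_of_prod _).trans (add_le_add ?_ ?_) <;>
  · refine (norm_le_norm_add_norm_of_prod _).trans ?_
    rw [dirDeriv_dirDeriv hg, dirDeriv_dirDeriv hg]
    rfl

/-- A bounded `C³` solution of `Δu + c uᵧ = f(u)` on the plane which is increasing in `y`. -/
structure MonotoneWave (f f' : ℝ → ℝ) (c : ℝ) (U : ℝ × ℝ → ℝ) : Prop where
  smooth : ContDiff ℝ 3 U
  pde : ∀ p, dirDeriv (1, 0) (dirDeriv (1, 0) U) p + dirDeriv (0, 1) (dirDeriv (0, 1) U) p +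
    c * dirDeriv (0, 1) U p = f (U p)
  bdd : ∀ p, |U p| ≤ 1
  dy_pos : ∀ p, 0 < dirDeriv (0, 1) U p
  hasDeriv : ∀ s, HasDerivAt f (f' s) s
  cont_deriv : Continuous f'

namespace MonotoneWave

variable {f f' : ℝ → ℝ} {c : ℝ} {U : ℝ × ℝ → ℝ}

theorem contDiff_dirDeriv (w : MonotoneWave f f' c U) (e : ℝ × ℝ) : ContDiff ℝ 2 (dirDeriv e U) :=
  w.smooth.contDiff_dirDeriv (by norm_num) e

theorem linearized (w : MonotoneWave f f' c U) (e p : ℝ × ℝ) :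
    dirDeriv (1, 0) (dirDeriv (1, 0) (dirDeriv e U)) p +
      dirDeriv (0, 1) (dirDeriv (0, 1) (dirDeriv e U)) p +
      c * dirDeriv (0, 1) (dirDeriv e U) p = f' (U p) * dirDeriv e U p := by
  have h2 : ContDiff ℝ 2 U := w.smooth.of_le (by norm_num)
  have hcomm : ∀ a : ℝ × ℝ, dirDeriv a (dirDeriv a (dirDeriv e U)) =
      dirDeriv e (dirDeriv a (dirDeriv a U)) := fun a => by
    rw [dirDeriv_comm h2 a e, dirDeriv_comm (w.contDiff_dirDeriv a) a e]
  rw [hcomm, hcomm, dirDeriv_comm h2 (0, 1) e]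
  have hd2 : ∀ a : ℝ × ℝ, DifferentiableAt ℝ (dirDeriv a (dirDeriv a U)) p := fun a =>
    ((w.contDiff_dirDeriv a).contDiff_dirDeriv (m := 1) (by norm_num) a).differentiable (by norm_num) p
  have hd1 : DifferentiableAt ℝ (dirDeriv (0, 1) U) p :=
    (w.contDiff_dirDeriv _).differentiable (by norm_num) p
  have hd0 : DifferentiableAt ℝ U p := h2.differentiable (by norm_num) p
  have h1 := (((hd2 (1, 0)).hasFDerivAt.add (hd2 (0, 1)).hasFDerivAt).add
    (hd1.hasFDerivAt.const_mul c))
  have h3 := (w.hasDeriv (U p)).comp_hasFDerivAt p hd0.hasFDerivAt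
  have h4 := h1.unique (h3.congr_of_eventuallyEq (Filter.Eventually.of_forall w.pde))
  have := congrArg (fun L : ℝ × ℝ →L[ℝ] ℝ => L e) h4
  simpa [dirDeriv] using this

/-- A bound for the derivative of the nonlinearity on the range of the wave. -/
theorem exists_deriv_bound (hf' : Continuous f') :
    ∃ L ≥ 0, ∀ s, |s| ≤ 1 → |f' s| ≤ L := by
  obtain ⟨L, hL⟩ := (isCompact_Icc (a := (-1 : ℝ)) (b := 1)).exists_bound_of_continuousOn
    hf'.continuousOn
  exact ⟨L, (norm_nonneg _).trans (hL 0 (by norm_num)), fun s hs => hL s (abs_le.1 hs)⟩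

/-- Second derivatives are controlled by first derivatives on a unit square. -/
theorem second_le (w : MonotoneWave f f' c U) {L : ℝ} (hL : ∀ s, |s| ≤ 1 → |f' s| ≤ L)
    {e p : ℝ × ℝ} {M : ℝ} (hM : ∀ q, dist q p ≤ 1 → |dirDeriv e U q| ≤ M) :
    |dirDeriv (1, 0) (dirDeriv e U) p| ≤ gradConst c * (M + L * M) ∧
      |dirDeriv (0, 1) (dirDeriv e U) p| ≤ gradConst c * (M + L * M) := by
  have hdist : ∀ x y, |x - p.1| ≤ 1 → |y - p.2| ≤ 1 → dist (x, y) p ≤ 1 := fun x y hx hy => by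
    rw [Prod.dist_eq, Real.dist_eq, Real.dist_eq]; exact max_le hx hy
  refine (hasPartials_of_contDiff (w.contDiff_dirDeriv e)).grad_le (x₀ := p.1) (y₀ := p.2)
    (fun x y hx hy => hM _ (hdist x y hx hy)) fun x y hx hy => ?_
  rw [w.linearized, abs_mul]
  have := hL _ (w.bdd (x, y))
  exact mul_le_mul this (hM _ (hdist x y hx hy)) (abs_nonneg _) ((abs_nonneg _).trans this)

theorem exists_bound (w : MonotoneWave f f' c U) :
    ∃ B > 0, ∀ p, (|dirDeriv (1, 0) U p| ≤ B ∧ |dirDeriv (0, 1) U p| ≤ B) ∧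
      (|dirDeriv (1, 0) (dirDeriv (1, 0) U) p| ≤ B ∧ |dirDeriv (0, 1) (dirDeriv (1, 0) U) p| ≤ B) ∧
      (|dirDeriv (1, 0) (dirDeriv (0, 1) U) p| ≤ B ∧
        |dirDeriv (0, 1) (dirDeriv (0, 1) U) p| ≤ B) := by
  obtain ⟨L, hL0, hL⟩ := exists_deriv_bound w.cont_deriv
  obtain ⟨N, hN⟩ := (isCompact_Icc (a := (-1 : ℝ)) (b := 1)).exists_bound_of_continuousOn
    (f := f) (fun s _ => (w.hasDeriv s).continuousAt.continuousWithinAt)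
  have hN0 : 0 ≤ N := (norm_nonneg _).trans (hN 0 (by norm_num))
  have hK := gradConst_pos c
  set M := gradConst c * (1 + N) with hM
  have h1 : ∀ p, |dirDeriv (1, 0) U p| ≤ M ∧ |dirDeriv (0, 1) U p| ≤ M := fun p =>
    (hasPartials_of_contDiff (w.smooth.of_le (by norm_num))).grad_le (c := c) (x₀ := p.1) (y₀ := p.2)
      (fun x y _ _ => w.bdd (x, y)) fun x y _ _ => by
        rw [w.pde]; exact hN _ (abs_le.1 (w.bdd (x, y)))
  have hM0 : 0 < M := by positivity
  have h2 : 0 ≤ gradConst c * (M + L * M) := by positivity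
  refine ⟨M + gradConst c * (M + L * M), by positivity, fun p => ⟨?_, ?_, ?_⟩⟩
  · exact (h1 p).imp (by intro h; linarith) (by intro h; linarith)
  · exact (w.second_le hL (e := (1, 0)) (p := p) fun q _ => (h1 q).1).imp
      (by intro h; linarith) (by intro h; linarith)
  · exact (w.second_le hL (e := (0, 1)) (p := p) fun q _ => (h1 q).2).imp
      (by intro h; linarith) (by intro h; linarith)

end MonotoneWave

/-- A derivative is controlled by a difference quotient and the second derivative. -/
theorem abs_deriv_le_slope_add {v v' v'' : ℝ → ℝ} {B h : ℝ} (hh : 0 < h)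
    (hv : ∀ t, HasDerivAt v (v' t) t) (hv' : ∀ t, HasDerivAt v' (v'' t) t)
    (hB : ∀ t, |v'' t| ≤ B) (a : ℝ) : |v' a| ≤ |v (a + h) - v a| / h + B * h := by
  obtain ⟨t, ht, he⟩ := exists_hasDerivAt_eq_slope v v' (show a < a + h by linarith)
    (fun t _ => (hv t).continuousAt.continuousWithinAt) (fun t _ => hv t)
  have h1 := Convex.norm_image_sub_le_of_norm_hasDerivWithin_le (s := Set.univ)
    (f := v') (f' := v'') (C := B) (x := t) (y := a)
    (fun x _ => (hv' x).hasDerivWithinAt) (fun x _ => hB x) convex_univ trivial trivial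
  rw [Real.norm_eq_abs, Real.norm_eq_abs] at h1
  have hB0 : 0 ≤ B := (abs_nonneg _).trans (hB a)
  have h2 : |a - t| ≤ h := by rw [abs_le]; constructor <;> linarith [ht.1, ht.2]
  have h3 : |v' t| = |v (a + h) - v a| / h := by
    rw [he, abs_div, add_sub_cancel_left, abs_of_pos hh]
  have h4 := mul_le_mul_of_nonneg_left h2 hB0
  have h5 := abs_add_le (v' t) (v' a - v' t)
  rw [add_sub_cancel] at h5
  linarith

theorem tendsto_zero_of_abs_le_div_add {φ : ℝ → ℝ} {l : Filter ℝ} {B : ℝ} (hB : 0 < B)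
    (h : ∀ r > 0, ∃ d : ℝ → ℝ, Tendsto d l (nhds 0) ∧ ∀ t, |φ t| ≤ |d t| / r + B * r) :
    Tendsto φ l (nhds 0) := by
  rw [Metric.tendsto_nhds]
  intro ε hε
  set r := ε / (2 * B) with hr
  have hr0 : 0 < r := by positivity
  obtain ⟨d, hd, hle⟩ := h r hr0
  filter_upwards [Metric.tendsto_nhds.1 hd (ε / 2 * r) (by positivity)] with t ht
  rw [Real.dist_eq, sub_zero] at ht ⊢
  have h1 : |d t| / r < ε / 2 := (div_lt_iff₀ hr0).2 ht
  have h2 : B * r = ε / 2 := by rw [hr]; field_simp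
  linarith [hle t]

namespace MonotoneWave

variable {f f' F : ℝ → ℝ} {c : ℝ} {U : ℝ × ℝ → ℝ}

/-- The gradient vanishes along vertical lines on which the wave converges. -/
theorem tendsto_grad (w : MonotoneWave f f' c U) {l : Filter ℝ} {a : ℝ}
    (hl : ∀ r : ℝ, Tendsto (fun y => y + r) l l)
    (hU : ∀ x, Tendsto (fun y => U (x, y)) l (nhds a)) (x : ℝ) :
    Tendsto (fun y => dirDeriv (1, 0) U (x, y)) l (nhds 0) ∧
      Tendsto (fun y => dirDeriv (0, 1) U (x, y)) l (nhds 0) := by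
  obtain ⟨B, hB0, hB⟩ := w.exists_bound
  have hP := hasPartials_of_contDiff (w.smooth.of_le (by norm_num : (2 : WithTop ℕ∞) ≤ 3))
  constructor
  · refine tendsto_zero_of_abs_le_div_add hB0 fun r hr =>
      ⟨fun y => U (x + r, y) - U (x, y), by simpa using (hU (x + r)).sub (hU x), fun y => ?_⟩
    exact abs_deriv_le_slope_add hr (fun t => hP.dx t y) (fun t => hP.dxx t y)
      (fun t => (hB (t, y)).2.1.1) x
  · refine tendsto_zero_of_abs_le_div_add hB0 fun r hr =>
      ⟨fun y => U (x, y + r) - U (x, y), by simpa using ((hU x).comp (hl r)).sub (hU x),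
        fun y => ?_⟩
    exact abs_deriv_le_slope_add hr (fun t => hP.dy x t) (fun t => hP.dyy x t)
      (fun t => (hB (x, t)).2.2.2) y

/-- The energy flux across horizontal lines. -/
noncomputable def flux (F : ℝ → ℝ) (U : ℝ × ℝ → ℝ) (p : ℝ × ℝ) : ℝ :=
  1 / 2 * (dirDeriv (0, 1) U p) ^ 2 - 1 / 2 * (dirDeriv (1, 0) U p) ^ 2 - F (U p)

theorem continuous_flux (w : MonotoneWave f f' c U) (hF : Continuous F) :
    Continuous (flux F U) := by
  have h1 := (w.contDiff_dirDeriv (1, 0)).continuous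
  have h2 := (w.contDiff_dirDeriv (0, 1)).continuous
  have h3 := hF.comp w.smooth.continuous
  exact ((continuous_const.mul (h2.pow 2)).sub (continuous_const.mul (h1.pow 2))).sub h3

theorem tendsto_integral_flux (w : MonotoneWave f f' c U) (hF : Continuous F)
    {l : Filter ℝ} [l.IsCountablyGenerated] {a : ℝ} (hFa : F a = 0)
    (hl : ∀ r : ℝ, Tendsto (fun y => y + r) l l)
    (hU : ∀ x, Tendsto (fun y => U (x, y)) l (nhds a)) (n : ℝ) :
    Tendsto (fun y => ∫ x in (-n)..n, flux F U (x, y)) l (nhds 0) := by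
  obtain ⟨B, hB0, hB⟩ := w.exists_bound
  obtain ⟨N, hN⟩ := (isCompact_Icc (a := (-1 : ℝ)) (b := 1)).exists_bound_of_continuousOn
    hF.continuousOn
  have key : Tendsto (fun y => ∫ x in (-n)..n, flux F U (x, y)) l
      (nhds (∫ _ in (-n)..n, (0 : ℝ))) := by
    refine intervalIntegral.tendsto_integral_filter_of_dominated_convergence
      (fun _ => B ^ 2 + N) (Eventually.of_forall fun y => ?_) (Eventually.of_forall fun y => ?_)
      intervalIntegrable_const (Eventually.of_forall fun x _ => ?_)
    · exact ((w.continuous_flux hF).comp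
        (continuous_id.prodMk continuous_const)).aestronglyMeasurable
    · refine Eventually.of_forall fun x _ => ?_
      have h1 := sq_le_sq.2 ((hB (x, y)).1.1.trans (le_abs_self B))
      have h2 := sq_le_sq.2 ((hB (x, y)).1.2.trans (le_abs_self B))
      have h3 := abs_le.1 (hN _ (abs_le.1 (w.bdd (x, y))))
      have h4 := sq_nonneg (dirDeriv (1, 0) U (x, y))
      have h5 := sq_nonneg (dirDeriv (0, 1) U (x, y))
      rw [Real.norm_eq_abs, flux, abs_le]
      constructor <;> linarith [h3.1, h3.2]
    · obtain ⟨h1, h2⟩ := w.tendsto_grad hl hU x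
      have h3 := (hF.tendsto a).comp (hU x)
      rw [hFa] at h3
      have h4 := (((h2.pow 2).const_mul (1 / 2)).sub ((h1.pow 2).const_mul (1 / 2))).sub h3
      rw [show (1 / 2 : ℝ) * 0 ^ 2 - 1 / 2 * 0 ^ 2 - 0 = 0 by norm_num] at h4
      exact h4
  simpa using key

theorem abs_integral_mul_le (w : MonotoneWave f f' c U) {B : ℝ}
    (hB : ∀ p, |dirDeriv (1, 0) U p| ≤ B) (x : ℝ) {m : ℝ} (hm : 0 ≤ m) :
    |∫ y in (-m)..m, dirDeriv (1, 0) U (x, y) * dirDeriv (0, 1) U (x, y)| ≤ 2 * B := by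
  have hB0 : 0 ≤ B := (abs_nonneg _).trans (hB 0)
  have hc : Continuous fun y => dirDeriv (0, 1) U (x, y) :=
    (w.contDiff_dirDeriv (0, 1)).continuous.comp (continuous_const.prodMk continuous_id)
  have hP := hasPartials_of_contDiff (w.smooth.of_le (by norm_num : (2 : WithTop ℕ∞) ≤ 3))
  have h1 : ∫ y in (-m)..m, dirDeriv (0, 1) U (x, y) = U (x, m) - U (x, -m) :=
    intervalIntegral.integral_eq_sub_of_hasDerivAt (fun y _ => hP.dy x y)
      (hc.intervalIntegrable _ _)
  have h2 := intervalIntegral.norm_integral_le_of_norm_le (μ := volume)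
    (f := fun y => dirDeriv (1, 0) U (x, y) * dirDeriv (0, 1) U (x, y))
    (g := fun y => B * dirDeriv (0, 1) U (x, y)) (show -m ≤ m by linarith)
    (Eventually.of_forall fun y _ => by
      rw [norm_mul, Real.norm_eq_abs, Real.norm_eq_abs, abs_of_pos (w.dy_pos _)]
      exact mul_le_mul_of_nonneg_right (hB _) (w.dy_pos _).le)
    ((continuous_const.mul hc).intervalIntegrable _ _)
  rw [intervalIntegral.integral_const_mul, h1, Real.norm_eq_abs] at h2
  have h3 := abs_le.1 (w.bdd (x, m))
  have h4 := abs_le.1 (w.bdd (x, -m))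
  nlinarith

/-- The energy identity on the rectangle `[-n, n] × [-m, m]`. -/
theorem energy_identity (w : MonotoneWave f f' c U) (hF : ∀ s, HasDerivAt F (f s) s) {n m : ℝ}
    (hn : 0 ≤ n) (hm : 0 ≤ m) :
    ∫ p in Set.Icc (-n, -m) (n, m), -(c * (dirDeriv (0, 1) U p) ^ 2) =
      (((∫ x in (-n)..n, flux F U (x, m)) - ∫ x in (-n)..n, flux F U (x, -m)) +
        ∫ y in (-m)..m, dirDeriv (1, 0) U (n, y) * dirDeriv (0, 1) U (n, y)) -
        ∫ y in (-m)..m, dirDeriv (1, 0) U (-n, y) * dirDeriv (0, 1) U (-n, y) := by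
  have hFc : Continuous F := continuous_iff_continuousAt.2 fun s => (hF s).continuousAt
  have h2 : ContDiff ℝ 2 U := w.smooth.of_le (by norm_num)
  have hd : ∀ e p, HasFDerivAt (dirDeriv e U) (fderiv ℝ (dirDeriv e U) p) p := fun e p =>
    ((w.contDiff_dirDeriv e).differentiable (by norm_num) p).hasFDerivAt
  have hdF : ∀ p, HasFDerivAt (fun q => F (U q)) (f (U p) • fderiv ℝ U p) p := fun p =>
    (hF (U p)).comp_hasFDerivAt p (h2.differentiable (by norm_num) p).hasFDerivAt
  have hdP := fun p => (hd (1, 0) p).mul (hd (0, 1) p)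
  have hdQ := fun p => ((((hd (0, 1) p).pow 2).const_mul (1 / 2 : ℝ)).sub
    (((hd (1, 0) p).pow 2).const_mul (1 / 2 : ℝ))).sub (hdF p)
  have hcP : Continuous (dirDeriv (1, 0) U * dirDeriv (0, 1) U) :=
    (w.contDiff_dirDeriv _).continuous.mul (w.contDiff_dirDeriv _).continuous
  have hc2 : Continuous fun p => -(c * (dirDeriv (0, 1) U p) ^ 2) :=
    (continuous_const.mul ((w.contDiff_dirDeriv _).continuous.pow 2)).neg
  have hdiv : (fun p : ℝ × ℝ => -(c * (dirDeriv (0, 1) U p) ^ 2)) = fun p =>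
      (fderiv ℝ (dirDeriv (1, 0) U * dirDeriv (0, 1) U) p) (1, 0) +
        (fderiv ℝ (flux F U) p) (0, 1) := by
    funext p
    have e1 := (hdP p).fderiv
    have e2 : fderiv ℝ (flux F U) p = _ := (hdQ p).fderiv
    rw [e1, e2]
    have e3 := congrFun (dirDeriv_comm h2 (1, 0) (0, 1)) p
    have e4 := w.pde p
    simp only [dirDeriv] at e3 e4
    simp [dirDeriv]
    linear_combination (-fderiv ℝ U p (0, 1)) * e4 - fderiv ℝ U p (1, 0) * e3
  rw [hdiv]
  refine integral_divergence_prod_Icc_of_hasFDerivAt_of_le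
    (dirDeriv (1, 0) U * dirDeriv (0, 1) U) (flux F U) _ _ _ _ ?_ hcP.continuousOn
    (w.continuous_flux hFc).continuousOn
    (fun p _ => (hdP p).differentiableAt.hasFDerivAt)
    (fun p _ => (show HasFDerivAt (flux F U) _ p from hdQ p).differentiableAt.hasFDerivAt) ?_
  · exact Prod.mk_le_mk.2 ⟨by linarith, by linarith⟩
  · rw [← hdiv]
    exact hc2.continuousOn.integrableOn_compact isCompact_Icc

/-- The dissipation `∬ uᵧ²` is finite. -/
theorem integrable_sq (w : MonotoneWave f f' c U) (hc : 0 < c) (hF : ∀ s, HasDerivAt F (f s) s)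
    (hF1 : F 1 = 0) (hF2 : F (-1) = 0) (htop : ∀ x, Tendsto (fun y => U (x, y)) atTop (nhds 1))
    (hbot : ∀ x, Tendsto (fun y => U (x, y)) atBot (nhds (-1))) :
    Integrable fun p => (dirDeriv (0, 1) U p) ^ 2 := by
  obtain ⟨B, hB0, hB⟩ := w.exists_bound
  have hFc : Continuous F := continuous_iff_continuousAt.2 fun s => (hF s).continuousAt
  have hcont : Continuous fun p => (dirDeriv (0, 1) U p) ^ 2 :=
    (w.contDiff_dirDeriv _).continuous.pow 2
  refine (aecover_closedBall (μ := volume) (x := (0 : ℝ × ℝ)) (l := atTop) (r := fun n : ℝ => n)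
    tendsto_id).integrable_of_integral_norm_bounded (4 * B / c)
    (fun n => hcont.continuousOn.integrableOn_compact (isCompact_closedBall _ _)) ?_
  filter_upwards [eventually_ge_atTop 0] with n hn
  have hball : closedBall (0 : ℝ × ℝ) n = Set.Icc (-n, -n) (n, n) := by
    rw [← Set.Icc_prod_Icc, ← Prod.mk_zero_zero, ← closedBall_prod_same, Real.closedBall_eq_Icc]
    simp
  have hnorm : ∀ p, ‖(dirDeriv (0, 1) U p) ^ 2‖ = (dirDeriv (0, 1) U p) ^ 2 := fun p =>
    Real.norm_of_nonneg (sq_nonneg _)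
  simp only [hnorm]
  rw [hball, le_div_iff₀ hc]
  have t1 := w.tendsto_integral_flux hFc hF1 (fun r => tendsto_atTop_add_const_right _ r tendsto_id)
    htop n
  have t2 := (w.tendsto_integral_flux hFc hF2
    (fun r => tendsto_atBot_add_const_right _ r tendsto_id) hbot n).comp tendsto_neg_atTop_atBot
  have t3 := ((t1.abs.add t2.abs).add_const (4 * B))
  simp only [abs_zero, zero_add] at t3
  refine ge_of_tendsto t3 ?_
  filter_upwards [eventually_ge_atTop n] with m hm
  have e1 := w.energy_identity hF hn (hn.trans hm)
  rw [integral_neg, integral_const_mul] at e1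
  have e2 : ∫ p in Set.Icc (-n, -n) (n, n), (dirDeriv (0, 1) U p) ^ 2 ≤
      ∫ p in Set.Icc (-n, -m) (n, m), (dirDeriv (0, 1) U p) ^ 2 := by
    refine setIntegral_mono_set (hcont.continuousOn.integrableOn_compact isCompact_Icc)
      (Eventually.of_forall fun p => sq_nonneg _) (Set.Icc_subset_Icc ?_ ?_).eventuallyLE
    · exact Prod.mk_le_mk.2 ⟨le_rfl, by linarith⟩
    · exact Prod.mk_le_mk.2 ⟨le_rfl, hm⟩
  have e3 := abs_le.1 (w.abs_integral_mul_le (fun p => (hB p).1.1) n (hn.trans hm))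
  have e4 := abs_le.1 (w.abs_integral_mul_le (fun p => (hB p).1.1) (-n) (hn.trans hm))
  have e5 := mul_le_mul_of_nonneg_right e2 hc.le
  have e6 := neg_abs_le (∫ x in (-n)..n, flux F U (x, m))
  have e7 := le_abs_self (∫ x in (-n)..n, flux F U (x, -m))
  simp only [Function.comp]
  linarith

theorem exists_dy_le (w : MonotoneWave f f' c U)
    (hinteg : Integrable fun p => (dirDeriv (0, 1) U p) ^ 2) {ε : ℝ} (hε : 0 < ε) :
    ∃ R, ∀ p, R ≤ ‖p‖ → |dirDeriv (0, 1) U p| ≤ ε := by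
  obtain ⟨B, hB0, hB⟩ := w.exists_bound
  set r := min 1 (ε / (4 * B)) with hr
  have hr0 : 0 < r := by positivity
  set κ := (ε / 2) ^ 2 * (2 * r) ^ 2 with hκ
  have hκ0 : 0 < κ := by positivity
  have hlip : ∀ p q, dist q p ≤ r → |dirDeriv (0, 1) U q - dirDeriv (0, 1) U p| ≤ ε / 2 := by
    intro p q hpq
    have h1 : ∀ z, ‖fderiv ℝ (dirDeriv (0, 1) U) z‖ ≤ 2 * B := fun z => by
      refine (norm_le_norm_add_norm_of_prod _).trans ?_
      have h2 := (hB z).2.2.1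
      have h3 := (hB z).2.2.2
      rw [dirDeriv] at h2 h3
      rw [Real.norm_eq_abs, Real.norm_eq_abs]
      linarith
    have h4 := Convex.norm_image_sub_le_of_norm_fderiv_le (s := Set.univ) (x := p) (y := q)
      (fun z _ => (w.contDiff_dirDeriv (0, 1)).differentiable (by norm_num) z)
      (fun z _ => h1 z) convex_univ trivial trivial
    rw [← dist_eq_norm q p] at h4
    have h5 : r * (4 * B) ≤ ε := by
      rw [← le_div_iff₀ (by positivity)]; exact min_le_right _ _
    rw [Real.norm_eq_abs] at h4
    nlinarith
  have htail : Tendsto (fun n : ℕ => ∫ p in (closedBall (0 : ℝ × ℝ) n)ᶜ,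
      (dirDeriv (0, 1) U p) ^ 2) atTop (nhds 0) := by
    have h1 := tendsto_setIntegral_of_antitone (μ := volume)
      (f := fun p => (dirDeriv (0, 1) U p) ^ 2)
      (s := fun n : ℕ => (closedBall (0 : ℝ × ℝ) n)ᶜ)
      (fun n => isClosed_closedBall.measurableSet.compl)
      (fun a b hab => Set.compl_subset_compl.2 (closedBall_subset_closedBall (by exact_mod_cast hab)))
      ⟨0, hinteg.integrableOn⟩
    have h2 : ⋂ n : ℕ, (closedBall (0 : ℝ × ℝ) n)ᶜ = ∅ := by
      rw [← Set.compl_iUnion, iUnion_closedBall_nat, Set.compl_univ]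
    rw [h2] at h1
    simpa using h1
  obtain ⟨n, hn⟩ := (htail.eventually (gt_mem_nhds hκ0)).exists
  refine ⟨n + 2, fun p hp => ?_⟩
  by_contra! hcon
  rw [abs_of_pos (w.dy_pos p)] at hcon
  have hr1 : r ≤ 1 := min_le_left _ _
  have hsub : closedBall p r ⊆ (closedBall (0 : ℝ × ℝ) n)ᶜ := by
    intro q hq hq'
    rw [mem_closedBall, dist_zero_right] at hq'
    have := norm_sub_norm_le p q
    rw [← dist_eq_norm, dist_comm] at this
    linarith [mem_closedBall.1 hq]
  have hvol : volume.real (closedBall p r) = (2 * r) ^ 2 := by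
    rw [show p = (p.1, p.2) from rfl, ← closedBall_prod_same, Measure.real,
      Measure.volume_eq_prod, Measure.prod_prod, Real.volume_closedBall, Real.volume_closedBall,
      ENNReal.toReal_mul, ENNReal.toReal_ofReal (by positivity)]
    ring
  have h1 : κ ≤ ∫ q in closedBall p r, (dirDeriv (0, 1) U q) ^ 2 := by
    have := setIntegral_ge_of_const_le_real (μ := volume) (s := closedBall p r)
      (f := fun q => (dirDeriv (0, 1) U q) ^ 2) (c := (ε / 2) ^ 2)
      isClosed_closedBall.measurableSet (isCompact_closedBall p r).measure_lt_top.ne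
      (fun q hq => by
        have := abs_le.1 (hlip p q hq)
        exact pow_le_pow_left₀ (by positivity) (by linarith [this.1]) 2) hinteg.integrableOn
    rwa [hvol] at this
  have h2 := setIntegral_mono_set (s := closedBall p r) (μ := volume)
    (f := fun q => (dirDeriv (0, 1) U q) ^ 2) hinteg.integrableOn
    (Eventually.of_forall fun p => sq_nonneg _) hsub.eventuallyLE
  linarith

/-- The first and second `y`-derivatives vanish at infinity. -/
theorem exists_vanish (w : MonotoneWave f f' c U)
    (hinteg : Integrable fun p => (dirDeriv (0, 1) U p) ^ 2) {ε : ℝ} (hε : 0 < ε) :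
    ∃ R, ∀ p, R ≤ ‖p‖ → |dirDeriv (0, 1) U p| ≤ ε ∧
      |dirDeriv (0, 1) (dirDeriv (0, 1) U) p| ≤ ε := by
  obtain ⟨L, hL0, hL⟩ := exists_deriv_bound w.cont_deriv
  have hK := gradConst_pos c
  set M := min ε (ε / (gradConst c * (1 + L))) with hM
  obtain ⟨R, hR⟩ := w.exists_dy_le hinteg (show 0 < M by positivity)
  refine ⟨R + 1, fun p hp => ⟨(hR p (by linarith)).trans (min_le_left _ _), ?_⟩⟩
  refine (w.second_le hL (e := (0, 1)) (p := p) (M := M) fun q hq => hR q ?_).2.trans ?_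
  · have := norm_sub_norm_le p q
    rw [← dist_eq_norm, dist_comm] at this
    linarith
  · rw [show gradConst c * (M + L * M) = M * (gradConst c * (1 + L)) by ring,
      ← le_div_iff₀ (by positivity)]
    exact min_le_right _ _

end MonotoneWave

namespace MonotoneWave

variable {f f' : ℝ → ℝ} {c : ℝ} {U : ℝ × ℝ → ℝ}

theorem vanishingWave (w : MonotoneWave f f' c U)
    (hinteg : Integrable fun p => (dirDeriv (0, 1) U p) ^ 2)
    (htop : ∀ x, Tendsto (fun y => U (x, y)) atTop (nhds 1))
    (hbot : ∀ x, Tendsto (fun y => U (x, y)) atBot (nhds (-1))) :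
    VanishingWave f c (fun x y => U (x, y)) (fun x y => dirDeriv (1, 0) U (x, y))
      (fun x y => dirDeriv (0, 1) U (x, y))
      (fun x y => dirDeriv (1, 0) (dirDeriv (1, 0) U) (x, y))
      (fun x y => dirDeriv (0, 1) (dirDeriv (0, 1) U) (x, y)) := by
  have hP := hasPartials_of_contDiff (w.smooth.of_le (by norm_num : (2 : WithTop ℕ∞) ≤ 3))
  obtain ⟨B, -, hB⟩ := w.exists_bound
  refine ⟨hP, fun x y => w.pde (x, y), fun x y => (abs_le.1 (w.bdd (x, y))).1, fun x => ?_, hbot,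
    ?_, ⟨B, fun x y => (hB (x, y)).1.1⟩, fun ε hε => ?_⟩
  · refine monotone_of_deriv_nonneg (fun y => (hP.dy x y).differentiableAt) fun y => ?_
    rw [(hP.dy x y).deriv]
    exact (w.dy_pos (x, y)).le
  · obtain ⟨b, hb⟩ := ((htop 0).eventually (lt_mem_nhds (show (0 : ℝ) < 1 by norm_num))).exists
    obtain ⟨a, ha⟩ := ((hbot 0).eventually (gt_mem_nhds (show (-1 : ℝ) < 0 by norm_num))).exists
    obtain ⟨y, hy⟩ := mem_range_of_exists_le_of_exists_ge
      (w.smooth.continuous.comp (Continuous.prodMk_right (0 : ℝ))) ⟨a, ha.le⟩ ⟨b, hb.le⟩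
    exact ⟨(0, y), hy⟩
  · obtain ⟨R, hR⟩ := w.exists_vanish hinteg hε
    exact ⟨R, fun x y h => hR (x, y) h⟩

end MonotoneWave

namespace VanishingWave

variable {f : ℝ → ℝ} {c : ℝ} {u ux uy uxx uyy : ℝ → ℝ → ℝ}

/-- The reflected wave `-u(x, -y)`. -/
theorem reflect (w : VanishingWave f c u ux uy uxx uyy) (hle : ∀ x y, u x y ≤ 1)
    (htop : ∀ x, Tendsto (u x) atTop (nhds 1)) :
    VanishingWave (fun s => -f (-s)) (-c) (fun x y => -u x (-y)) (fun x y => -ux x (-y))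
      (fun x y => uy x (-y)) (fun x y => -uxx x (-y)) (fun x y => -uyy x (-y)) := by
  obtain ⟨q, hq⟩ := w.zero
  obtain ⟨B, hB⟩ := w.ux_bdd
  refine ⟨w.partials.reflect, fun x y => ?_, fun x y => neg_le_neg (hle x (-y)),
    fun x a b hab => neg_le_neg (w.mono x (neg_le_neg hab)),
    fun x => ((htop x).comp tendsto_neg_atBot_atTop).neg, ⟨(q.1, -q.2), ?_⟩,
    ⟨B, fun x y => ?_⟩, fun ε hε => ?_⟩
  · rw [neg_neg, ← w.pde]; ring
  · simp [hq]
  · rw [abs_neg]; exact hB x (-y)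
  · obtain ⟨R, hR⟩ := w.vanish ε hε
    refine ⟨R, fun x y h => ?_⟩
    rw [abs_neg]
    refine hR x (-y) ?_
    rwa [Prod.norm_mk, norm_neg, ← Prod.norm_mk]

end VanishingWave

theorem infDist_reflect (s : Set (ℝ × ℝ)) (p : ℝ × ℝ) :
    infDist (p.1, -p.2) {q : ℝ × ℝ | (q.1, -q.2) ∈ s} = infDist p s := by
  have hiso : Isometry fun q : ℝ × ℝ => (q.1, -q.2) := Isometry.of_dist_eq fun a b => by
    simp [Prod.dist_eq]
  rw [← infDist_image hiso (x := p) (t := s)]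
  congr 1
  ext q
  constructor
  · intro hq
    exact ⟨(q.1, -q.2), hq, by simp⟩
  · rintro ⟨r, hr, rfl⟩
    simpa using hr

theorem mul_exp_neg_mul_mono {C C' ν ν' d : ℝ} (hC : 0 ≤ C) (hCC : C ≤ C') (hν : ν' ≤ ν)
    (hd : 0 ≤ d) : C * Real.exp (-(ν * d)) ≤ C' * Real.exp (-(ν' * d)) :=
  mul_le_mul hCC (Real.exp_le_exp.2 (neg_le_neg (mul_le_mul_of_nonneg_right hν hd)))
    (Real.exp_pos _).le (hC.trans hCC)

theorem exp_neg_infDist_le {s : Set (ℝ × ℝ)} {p q : ℝ × ℝ} {ν : ℝ} (hν : 0 ≤ ν)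
    (h : dist q p ≤ 1) :
    Real.exp (-(ν * infDist q s)) ≤ Real.exp ν * Real.exp (-(ν * infDist p s)) := by
  rw [← Real.exp_add, Real.exp_le_exp]
  have := infDist_le_infDist_add_dist (s := s) (x := p) (y := q)
  rw [dist_comm] at this
  nlinarith

namespace MonotoneWave

variable {f f' : ℝ → ℝ} {c : ℝ} {U : ℝ × ℝ → ℝ}

theorem exists_one_sub_abs_le (w : MonotoneWave f f' c U)
    (hinteg : Integrable fun p => (dirDeriv (0, 1) U p) ^ 2)
    (htop : ∀ x, Tendsto (fun y => U (x, y)) atTop (nhds 1))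
    (hbot : ∀ x, Tendsto (fun y => U (x, y)) atBot (nhds (-1)))
    (hf1 : f (-1) = 0) (hf2 : f 1 = 0) (hd1 : 0 < f' (-1)) (hd2 : 0 < f' 1)
    (hpos : ∀ s ∈ Set.Ioo (-1 : ℝ) 0, 0 < f s) (hneg : ∀ s ∈ Set.Ioo (0 : ℝ) 1, f s < 0) :
    ∃ C > 0, ∃ ν > 0, ∀ p, 1 - |U p| ≤ C * Real.exp (-(ν * infDist p {q | U q = 0})) := by
  have hf : Continuous f := continuous_iff_continuousAt.2 fun s => (w.hasDeriv s).continuousAt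
  have v := w.vanishingWave hinteg htop hbot
  have v' := v.reflect (fun x y => (abs_le.1 (w.bdd (x, y))).2) htop
  obtain ⟨C, hC, ν, hν, h⟩ := v.exists_one_add_le hf hf1 hd1 (w.hasDeriv _) hpos
  obtain ⟨C', hC', ν', hν', h'⟩ := v'.exists_one_add_le (hf.comp continuous_neg).neg
    (by simpa using hf2) hd2
    (by
      have h2 := w.hasDeriv 1
      rw [show (1 : ℝ) = -(-1) by norm_num] at h2
      exact ((h2.comp (-1) (hasDerivAt_neg _)).neg).congr_deriv (by norm_num))
    (fun s hs => neg_pos.2 (hneg _ ⟨by linarith [hs.2], by linarith [hs.1]⟩))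
  have hC1 : C ≤ max (max C C') 1 := (le_max_left _ _).trans (le_max_left _ _)
  have hC2 : C' ≤ max (max C C') 1 := (le_max_right _ _).trans (le_max_left _ _)
  refine ⟨max (max C C') 1, by positivity, min ν ν', by positivity, fun p => ?_⟩
  rcases lt_trichotomy (U p) 0 with hp | hp | hp
  · have h1 := h p hp
    rw [abs_of_neg hp, sub_neg_eq_add]
    exact h1.trans (mul_exp_neg_mul_mono hC.le hC1 (min_le_left _ _) infDist_nonneg)
  · rw [infDist_zero_of_mem (show p ∈ {q | U q = 0} from hp), hp]
    simp
  · have h1 := h' (p.1, -p.2) (by simpa using hp)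
    have h2 : {q : ℝ × ℝ | -U (q.1, -q.2) = 0} = {q : ℝ × ℝ | (q.1, -q.2) ∈ {q | U q = 0}} := by
      ext q; simp
    rw [h2, infDist_reflect] at h1
    rw [abs_of_pos hp]
    simp only [neg_neg, ← sub_eq_add_neg] at h1
    exact h1.trans (mul_exp_neg_mul_mono hC'.le hC2 (min_le_right _ _) infDist_nonneg)

theorem abs_le_of_abs_sub_le (w : MonotoneWave f f' c U) {L : ℝ}
    (hL : ∀ s, |s| ≤ 1 → |f' s| ≤ L) {a s : ℝ} (ha : |a| ≤ 1) (hs : |s| ≤ 1) (hfa : f a = 0) :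
    |f s| ≤ L * |s - a| := by
  have := (convex_Icc (-1 : ℝ) 1).norm_image_sub_le_of_norm_hasDerivWithin_le
    (fun t _ => (w.hasDeriv t).hasDerivWithinAt) (fun t ht => hL t (abs_le.2 ht))
    (abs_le.1 ha) (abs_le.1 hs)
  simpa [hfa] using this

/-- Gradient estimate near a point where `U` is close to a zero `a` of `f`. -/
theorem grad_le_of_abs_sub_le (w : MonotoneWave f f' c U) {L : ℝ} (hL0 : 0 ≤ L)
    (hL : ∀ s, |s| ≤ 1 → |f' s| ≤ L) {a M : ℝ} {p : ℝ × ℝ} (ha : |a| ≤ 1) (hfa : f a = 0)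
    (hM : ∀ q, dist q p ≤ 1 → |U q - a| ≤ M) :
    |dirDeriv (1, 0) U p| ≤ gradConst c * (M + L * M) ∧
      |dirDeriv (0, 1) U p| ≤ gradConst c * (M + L * M) := by
  have hP := hasPartials_of_contDiff (w.smooth.of_le (by norm_num : (2 : WithTop ℕ∞) ≤ 3))
  have hdist : ∀ x y, |x - p.1| ≤ 1 → |y - p.2| ≤ 1 → dist (x, y) p ≤ 1 := fun x y hx hy => by
    rw [Prod.dist_eq, Real.dist_eq, Real.dist_eq]; exact max_le hx hy
  refine (hP.sub_const a).grad_le (x₀ := p.1) (y₀ := p.2)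
    (fun x y hx hy => hM _ (hdist x y hx hy)) fun x y hx hy => ?_
  rw [w.pde (x, y)]
  exact (w.abs_le_of_abs_sub_le hL ha (w.bdd _) hfa).trans
    (mul_le_mul_of_nonneg_left (hM _ (hdist x y hx hy)) hL0)

theorem exists_grad_le (w : MonotoneWave f f' c U) (hf1 : f (-1) = 0) (hf2 : f 1 = 0) {C ν : ℝ}
    (hC : 0 < C) (hν : 0 < ν)
    (h : ∀ p, 1 - |U p| ≤ C * Real.exp (-(ν * infDist p {q | U q = 0}))) :
    ∃ K > 0, ∀ p, |dirDeriv (1, 0) U p| ≤ K * Real.exp (-(ν * infDist p {q | U q = 0})) ∧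
      |dirDeriv (0, 1) U p| ≤ K * Real.exp (-(ν * infDist p {q | U q = 0})) := by
  obtain ⟨L, hL0, hL⟩ := exists_deriv_bound w.cont_deriv
  obtain ⟨B, hB0, hB⟩ := w.exists_bound
  have hG := gradConst_pos c
  set Γ := {q | U q = 0} with hΓ
  set K₀ := gradConst c * (C * Real.exp ν + L * (C * Real.exp ν)) with hK₀
  have hK₀pos : 0 < K₀ := by positivity
  have hcont := w.smooth.continuous
  refine ⟨max K₀ (B * Real.exp ν), by positivity, fun p => ?_⟩
  have hE := Real.exp_pos (-(ν * infDist p Γ))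
  rcases le_or_gt (infDist p Γ) 1 with hd | hd
  · have h1 : B ≤ max K₀ (B * Real.exp ν) * Real.exp (-(ν * infDist p Γ)) := by
      refine le_trans ?_ (mul_le_mul_of_nonneg_right (le_max_right K₀ (B * Real.exp ν)) hE.le)
      rw [mul_assoc, ← Real.exp_add]
      refine le_mul_of_one_le_right hB0.le (Real.one_le_exp ?_)
      nlinarith
    exact ⟨(hB p).1.1.trans h1, (hB p).1.2.trans h1⟩
  have hM : ∀ q, dist q p ≤ 1 → 1 - |U q| ≤ C * Real.exp ν * Real.exp (-(ν * infDist p Γ)) :=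
    fun q hq => (h q).trans (by
      rw [mul_assoc]
      exact mul_le_mul_of_nonneg_left (exp_neg_infDist_le hν.le hq) hC.le)
  suffices hex : ∃ a, |a| ≤ 1 ∧ f a = 0 ∧
      ∀ q, dist q p ≤ 1 → |U q - a| ≤ C * Real.exp ν * Real.exp (-(ν * infDist p Γ)) by
    obtain ⟨a, ha, hfa, haM⟩ := hex
    have h1 := w.grad_le_of_abs_sub_le hL0 hL ha hfa haM
    have h2 : gradConst c * (C * Real.exp ν * Real.exp (-(ν * infDist p Γ)) +
        L * (C * Real.exp ν * Real.exp (-(ν * infDist p Γ)))) ≤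
        max K₀ (B * Real.exp ν) * Real.exp (-(ν * infDist p Γ)) := by
      refine le_trans (le_of_eq ?_) (mul_le_mul_of_nonneg_right (le_max_left K₀ _) hE.le)
      rw [hK₀]; ring
    exact ⟨h1.1.trans h2, h1.2.trans h2⟩
  rcases lt_trichotomy (U p) 0 with hp | hp | hp
  · refine ⟨-1, by norm_num, hf1, fun q hq => ?_⟩
    have hq0 : U q < 0 := VanishingWave.neg_of_mem_ball (u := fun x y => U (x, y)) hcont hp
      (le_refl (infDist p Γ)) (mem_ball.2 (hq.trans_lt hd))
    have h1 := hM q hq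
    have h2 := (abs_le.1 (w.bdd q)).1
    rw [abs_of_neg hq0] at h1
    rw [abs_of_nonneg (by linarith)]
    linarith
  · rw [infDist_zero_of_mem (show p ∈ Γ from hp)] at hd
    linarith
  · refine ⟨1, by norm_num, hf2, fun q hq => ?_⟩
    have hset : {q : ℝ × ℝ | -U (q.1, q.2) = 0} = Γ := by ext q; simp [hΓ]
    have hq0 : -U q < 0 := VanishingWave.neg_of_mem_ball (u := fun x y => -U (x, y)) hcont.neg
      (neg_lt_zero.2 hp) (by rw [hset]) (mem_ball.2 (hq.trans_lt hd))
    have h1 := hM q hq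
    have h2 := (abs_le.1 (w.bdd q)).2
    rw [abs_of_pos (neg_lt_zero.1 hq0)] at h1
    rw [abs_of_nonpos (by linarith)]
    linarith

theorem exists_decay (w : MonotoneWave f f' c U) (hf1 : f (-1) = 0) (hf2 : f 1 = 0) {C ν : ℝ}
    (hC : 0 < C) (hν : 0 < ν)
    (h : ∀ p, 1 - |U p| ≤ C * Real.exp (-(ν * infDist p {q | U q = 0}))) :
    ∃ K > 0, ∀ p, |U p ^ 2 - 1| + ‖iteratedFDeriv ℝ 1 U p‖ + ‖iteratedFDeriv ℝ 2 U p‖ ≤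
      K * Real.exp (-(ν * infDist p {q | U q = 0})) := by
  obtain ⟨L, hL0, hL⟩ := exists_deriv_bound w.cont_deriv
  obtain ⟨K, hK0, hK⟩ := w.exists_grad_le hf1 hf2 hC hν h
  have hG := gradConst_pos c
  set Γ := {q | U q = 0}
  refine ⟨2 * C + 2 * K + 4 * (gradConst c * (K * Real.exp ν + L * (K * Real.exp ν))),
    by positivity, fun p => ?_⟩
  set E := Real.exp (-(ν * infDist p Γ)) with hE
  have h0 : |U p ^ 2 - 1| ≤ 2 * (C * E) := by
    have h1 := h p
    have h2 := w.bdd p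
    have h3 := abs_nonneg (U p)
    rw [← sq_abs, abs_of_nonpos (by nlinarith)]
    nlinarith
  have hM : ∀ q, dist q p ≤ 1 → K * Real.exp (-(ν * infDist q Γ)) ≤ K * Real.exp ν * E :=
    fun q hq => by
      rw [mul_assoc]
      exact mul_le_mul_of_nonneg_left (exp_neg_infDist_le hν.le hq) hK0.le
  have hx := w.second_le hL (e := (1, 0)) fun q hq => (hK q).1.trans (hM q hq)
  have hy := w.second_le hL (e := (0, 1)) fun q hq => (hK q).2.trans (hM q hq)
  have h1 := norm_iteratedFDeriv_one_le (g := U) p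
  have h2 := norm_iteratedFDeriv_two_le (w.smooth.of_le (by norm_num : (2 : WithTop ℕ∞) ≤ 3)) p
  have h3 := hK p
  linarith [hx.1, hx.2, hy.1, hy.2, h3.1, h3.2]

end MonotoneWave

theorem IsSolution.monotoneWave {F : ℝ → ℝ} {c : ℝ} {u : ℝ → ℝ → ℝ} (hu : IsSolution F c u)
    (hF : ContDiff ℝ 3 F) :
    MonotoneWave (deriv F) (deriv (deriv F)) c fun q : ℝ × ℝ => u q.1 q.2 := by
  obtain ⟨hsm, hpde, hbdd, hpos⟩ := hu
  have hP := hasPartials_of_contDiff (hsm.of_le (by norm_num : (2 : WithTop ℕ∞) ≤ 3))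
  have hx : ∀ x y, pdx u x y = dirDeriv (1, 0) (fun q : ℝ × ℝ => u q.1 q.2) (x, y) :=
    fun x y => (hP.dx x y).deriv
  have hy : ∀ x y, pdy u x y = dirDeriv (0, 1) (fun q : ℝ × ℝ => u q.1 q.2) (x, y) :=
    fun x y => (hP.dy x y).deriv
  have hF2 : ContDiff ℝ 2 (deriv F) := (contDiff_succ_iff_deriv (n := 2).1 hF).2.2
  have hF1 : ContDiff ℝ 1 (deriv (deriv F)) := (contDiff_succ_iff_deriv (n := 1).1 hF2).2.2
  refine ⟨hsm, fun p => ?_, fun p => hbdd p.1 p.2, fun p => ?_, fun s => ?_, hF1.continuous⟩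
  · have h := hpde p.1 p.2
    rw [pdxx, pdyy, hy] at h
    simp only [hx, hy] at h
    rwa [(hP.dxx p.1 p.2).deriv, (hP.dyy p.1 p.2).deriv] at h
  · rw [← hy p.1 p.2]
    exact hpos p.1 p.2
  · exact (hF2.differentiable (by norm_num) s).hasDerivAt

/-- Exponential decay of `u` and its derivatives away from the zero level set
(Lemma 2.4). -/
theorem exponential_decay_from_level_set
    (F : ℝ → ℝ) (hF : BalancedDoubleWell F) (c : ℝ) (hc : 0 < c)
    (u : ℝ → ℝ → ℝ) (hu : IsTravelingWave F c u) :
    ∃ C > (0 : ℝ), ∃ ν > (0 : ℝ), ∀ p : ℝ × ℝ,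
      |(u p.1 p.2) ^ 2 - 1| +
        ‖iteratedFDeriv ℝ 1 (fun q : ℝ × ℝ => u q.1 q.2) p‖ +
        ‖iteratedFDeriv ℝ 2 (fun q : ℝ × ℝ => u q.1 q.2) p‖ ≤
      C * Real.exp (-(ν * Metric.infDist p {q : ℝ × ℝ | u q.1 q.2 = 0})) := by
  obtain ⟨hsm, hf1, hf2, hd1, hd2, hpos, hneg, hF1, hF2⟩ := hF
  obtain ⟨hsol, htop, hbot⟩ := hu
  have w := hsol.monotoneWave hsm
  have hinteg := w.integrable_sq hc (fun s => (hsm.differentiable (by norm_num) s).hasDerivAt)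
    hF2 hF1 htop hbot
  obtain ⟨C, hC, ν, hν, h⟩ :=
    w.exists_one_sub_abs_le hinteg htop hbot hf1 hf2 hd1 hd2 hpos hneg
  obtain ⟨K, hK, hdecay⟩ := w.exists_decay hf1 hf2 hC hν h
  exact ⟨K, hK, ν, hν, hdecay⟩
end

section
/- Let u be a monotone traveling wave solution of the balanced Allen-Cahn equation in the plane. Then the function ρ(y) := ∫_ℝ [ ½((∂u/∂x(x,y))² − (∂u/∂y(x,y))²) + F(u(x,y)) ] dx is finite for every y ∈ ℝ, and the Hamiltonian identity ρ(y) − ρ(y₀) = c ∫_{y₀}^{y} ∫_ℝ (∂u/∂y(x,t))² dx dt holds for all y₀, y ∈ ℝ. -/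
open Real Filter MeasureTheory Metric

section PartialDerivatives

variable {f : ℝ → ℝ → ℝ}

lemma hasDerivAt_fst_of_differentiable_s6 (hf : Differentiable ℝ (fun p : ℝ × ℝ => f p.1 p.2))
    (x y : ℝ) :
    HasDerivAt (fun t => f t y) (fderiv ℝ (fun p : ℝ × ℝ => f p.1 p.2) (x, y) (1, 0)) x := by
  have hg : HasDerivAt (fun t : ℝ => (t, y)) ((1, 0) : ℝ × ℝ) x :=
    (hasDerivAt_id x).prodMk (hasDerivAt_const x y)
  exact (hf (x, y)).hasFDerivAt.comp_hasDerivAt x hg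

lemma hasDerivAt_snd_of_differentiable_s6 (hf : Differentiable ℝ (fun p : ℝ × ℝ => f p.1 p.2))
    (x y : ℝ) :
    HasDerivAt (fun t => f x t) (fderiv ℝ (fun p : ℝ × ℝ => f p.1 p.2) (x, y) (0, 1)) y := by
  have hg : HasDerivAt (fun t : ℝ => (x, t)) ((0, 1) : ℝ × ℝ) y :=
    (hasDerivAt_const y x).prodMk (hasDerivAt_id y)
  exact (hf (x, y)).hasFDerivAt.comp_hasDerivAt y hg

lemma hasDerivAt_pdx (hf : ContDiff ℝ 1 (fun p : ℝ × ℝ => f p.1 p.2)) (x y : ℝ) :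
    HasDerivAt (fun t => f t y) (pdx f x y) x :=
  (hasDerivAt_fst_of_differentiable_s6 (hf.differentiable one_ne_zero) x
    y).differentiableAt.hasDerivAt

lemma hasDerivAt_pdy (hf : ContDiff ℝ 1 (fun p : ℝ × ℝ => f p.1 p.2)) (x y : ℝ) :
    HasDerivAt (fun t => f x t) (pdy f x y) y :=
  (hasDerivAt_snd_of_differentiable_s6 (hf.differentiable one_ne_zero) x
    y).differentiableAt.hasDerivAt

lemma pdx_eq_fderiv (hf : Differentiable ℝ (fun p : ℝ × ℝ => f p.1 p.2)) (x y : ℝ) :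
    pdx f x y = fderiv ℝ (fun p : ℝ × ℝ => f p.1 p.2) (x, y) (1, 0) :=
  (hasDerivAt_fst_of_differentiable_s6 hf x y).deriv

lemma pdy_eq_fderiv (hf : Differentiable ℝ (fun p : ℝ × ℝ => f p.1 p.2)) (x y : ℝ) :
    pdy f x y = fderiv ℝ (fun p : ℝ × ℝ => f p.1 p.2) (x, y) (0, 1) :=
  (hasDerivAt_snd_of_differentiable_s6 hf x y).deriv

lemma contDiff_pdx {n m : ℕ} (hf : ContDiff ℝ n (fun p : ℝ × ℝ => f p.1 p.2))
    (hmn : m + 1 ≤ n) :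
    ContDiff ℝ m (fun p : ℝ × ℝ => pdx f p.1 p.2) := by
  have hd : Differentiable ℝ (fun p : ℝ × ℝ => f p.1 p.2) :=
    hf.differentiable (by norm_cast; omega)
  simp_rw [pdx_eq_fderiv hd]
  exact (hf.fderiv_right (m := m) (by exact_mod_cast hmn)).clm_apply contDiff_const

lemma contDiff_pdy {n m : ℕ} (hf : ContDiff ℝ n (fun p : ℝ × ℝ => f p.1 p.2))
    (hmn : m + 1 ≤ n) :
    ContDiff ℝ m (fun p : ℝ × ℝ => pdy f p.1 p.2) := by
  have hd : Differentiable ℝ (fun p : ℝ × ℝ => f p.1 p.2) :=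
    hf.differentiable (by norm_cast; omega)
  simp_rw [pdy_eq_fderiv hd]
  exact (hf.fderiv_right (m := m) (by exact_mod_cast hmn)).clm_apply contDiff_const

/-- Mixed partial derivatives of a `C²` function commute. -/
lemma pdy_pdx_comm (hf : ContDiff ℝ 2 (fun p : ℝ × ℝ => f p.1 p.2)) (x y : ℝ) :
    pdy (pdx f) x y = pdx (pdy f) x y := by
  set g : ℝ × ℝ → ℝ := fun p => f p.1 p.2 with hg
  have hd : Differentiable ℝ g := hf.differentiable two_ne_zero
  have hd' : Differentiable ℝ (fderiv ℝ g) :=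
    (hf.fderiv_right (m := 1) (by norm_num)).differentiable one_ne_zero
  have hx : pdx f = fun x y => fderiv ℝ g (x, y) (1, 0) := by
    ext x y; exact pdx_eq_fderiv hd x y
  have hy : pdy f = fun x y => fderiv ℝ g (x, y) (0, 1) := by
    ext x y; exact pdy_eq_fderiv hd x y
  have key : ∀ v w : ℝ × ℝ,
      fderiv ℝ (fun p : ℝ × ℝ => fderiv ℝ g p v) (x, y) w = fderiv ℝ (fderiv ℝ g) (x, y) w v := by
    intro v w
    rw [fderiv_clm_apply (hd' _) (differentiableAt_const _)]
    simp
  have hda : ∀ v : ℝ × ℝ, Differentiable ℝ (fun p : ℝ × ℝ => fderiv ℝ g p v) := fun v =>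
    hd'.clm_apply (differentiable_const _)
  rw [hx, hy, pdy_eq_fderiv (f := fun x y => fderiv ℝ g (x, y) (1, 0)) (hda (1, 0)),
    pdx_eq_fderiv (f := fun x y => fderiv ℝ g (x, y) (0, 1)) (hda (0, 1))]
  simp only [Prod.mk.eta]
  rw [key, key]
  exact (hf.contDiffAt.isSymmSndFDerivAt (by simp)) _ _

end PartialDerivatives

/-- Differentiation under an integral over a compact interval. -/
lemma hasDerivAt_parametric_integral {g g' : ℝ → ℝ → ℝ}
    (hg : Continuous fun p : ℝ × ℝ => g p.1 p.2) (hg' : Continuous fun p : ℝ × ℝ => g' p.1 p.2)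
    (hd : ∀ x y, HasDerivAt (fun t => g x t) (g' x y) y) (a b y : ℝ) :
    HasDerivAt (fun t => ∫ x in a..b, g x t) (∫ x in a..b, g' x y) y := by
  have hK : IsCompact (Set.uIcc a b ×ˢ closedBall y 1) :=
    isCompact_uIcc.prod (isCompact_closedBall y 1)
  obtain ⟨C, hC⟩ := hK.exists_bound_of_continuousOn hg'.continuousOn
  have hgx : ∀ t, Continuous fun x => g x t := fun t =>
    hg.comp (continuous_id.prodMk continuous_const)
  have hgx' : ∀ t, Continuous fun x => g' x t := fun t =>
    hg'.comp (continuous_id.prodMk continuous_const)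
  refine (intervalIntegral.hasDerivAt_integral_of_dominated_loc_of_deriv_le
    (F := fun t x => g x t) (F' := fun t x => g' x t) (bound := fun _ => C)
    (ball_mem_nhds y one_pos) ?_ ?_ ?_ ?_ ?_ ?_).2
  · exact Eventually.of_forall fun t => (hgx t).aestronglyMeasurable
  · exact (hgx y).intervalIntegrable _ _
  · exact (hgx' y).aestronglyMeasurable
  · refine Eventually.of_forall fun x hx t ht => ?_
    exact hC (x, t) ⟨Set.uIoc_subset_uIcc hx, ball_subset_closedBall ht⟩
  · exact intervalIntegrable_const
  · exact Eventually.of_forall fun x _ t _ => hd x t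

lemma continuous_parametric_integral {g : ℝ → ℝ → ℝ}
    (hg : Continuous fun p : ℝ × ℝ => g p.1 p.2) (a b : ℝ) :
    Continuous fun y => ∫ x in a..b, g x y := by
  apply intervalIntegral.continuous_parametric_intervalIntegral_of_continuous'
  exact hg.comp continuous_swap

section OneDimensional

lemma mul_sub_le_of_hasDerivAt {f f' : ℝ → ℝ} {C a b : ℝ} (hf : ∀ y, HasDerivAt f (f' y) y)
    (hab : a ≤ b) (h : ∀ y ∈ Set.Icc a b, C ≤ f' y) : C * (b - a) ≤ f b - f a := by
  refine (convex_Icc a b).mul_sub_le_image_sub_of_le_deriv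
    (fun y _ => (hf y).continuousAt.continuousWithinAt)
    (fun y _ => (hf y).differentiableAt.differentiableWithinAt) (fun y hy => ?_)
    a (Set.left_mem_Icc.2 hab) b (Set.right_mem_Icc.2 hab) hab
  rw [(hf y).deriv]
  exact h y (interior_subset hy)

/-- A bounded function cannot satisfy `W'' + c W' ≥ ε > 0` near `+∞`. -/
lemma frequently_atTop_lt_of_bounded {W W₁ W₂ : ℝ → ℝ} {c B ε : ℝ}
    (h₁ : ∀ y, HasDerivAt W (W₁ y) y) (h₂ : ∀ y, HasDerivAt W₁ (W₂ y) y)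
    (hB : ∀ y, |W y| ≤ B) (hε : 0 < ε) : ∃ᶠ y in atTop, W₂ y + c * W₁ y < ε := by
  intro hev
  obtain ⟨Y, hY⟩ := eventually_atTop.1 hev
  simp only [not_lt] at hY
  have hp : ∀ y, HasDerivAt (fun y => W₁ y + c * W y) (W₂ y + c * W₁ y) y := fun y =>
    (h₂ y).add ((h₁ y).const_mul c)
  have hcW : ∀ y, c * W y ≤ |c| * B := fun y =>
    (le_abs_self _).trans (by rw [abs_mul]; gcongr; exact hB y)
  set D := |W₁ Y + c * W Y| + |c| * B + 1 with hD
  have hD0 : 0 ≤ D := by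
    have : 0 ≤ |c| * B := mul_nonneg (abs_nonneg _) ((abs_nonneg _).trans (hB 0))
    positivity
  have hW₁ : ∀ y, Y + D / ε ≤ y → 1 ≤ W₁ y := by
    intro y hy
    have hYy : Y ≤ y := le_trans (le_add_of_nonneg_right (by positivity)) hy
    have h := mul_sub_le_of_hasDerivAt hp hYy (fun t ht => hY t ht.1)
    have h' : D ≤ ε * (y - Y) := by
      rw [← div_le_iff₀' hε]; linarith
    have := neg_abs_le (W₁ Y + c * W Y)
    have := hcW y
    linarith
  have h := mul_sub_le_of_hasDerivAt (a := Y + D / ε) (b := Y + D / ε + 2 * B + 1) h₁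
    (by linarith [(abs_nonneg _).trans (hB 0)]) (fun t ht => hW₁ t ht.1)
  have := abs_le.1 (hB (Y + D / ε))
  have := abs_le.1 (hB (Y + D / ε + 2 * B + 1))
  linarith

/-- A bounded function cannot satisfy `W'' + c W' ≥ ε > 0` near `-∞`. -/
lemma frequently_atBot_lt_of_bounded {W W₁ W₂ : ℝ → ℝ} {c B ε : ℝ}
    (h₁ : ∀ y, HasDerivAt W (W₁ y) y) (h₂ : ∀ y, HasDerivAt W₁ (W₂ y) y)
    (hB : ∀ y, |W y| ≤ B) (hε : 0 < ε) : ∃ᶠ y in atBot, W₂ y + c * W₁ y < ε := by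
  have h₁' : ∀ y, HasDerivAt (fun y => W (-y)) (-W₁ (-y)) y := fun y =>
    ((h₁ (-y)).comp y (hasDerivAt_neg y)).congr_deriv (by ring)
  have h₂' : ∀ y, HasDerivAt (fun y => -W₁ (-y)) (W₂ (-y)) y := fun y =>
    ((h₂ (-y)).comp y (hasDerivAt_neg y)).neg.congr_deriv (by ring)
  have h := frequently_atTop_lt_of_bounded (c := -c) h₁' h₂' (fun y => hB (-y)) hε
  have h' := tendsto_neg_atTop_atBot.frequently (p := fun y => W₂ y + c * W₁ y < ε)
    (h.mono fun y hy => by simpa using hy)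
  exact h'

lemma exists_le_one_of_integral_le {W : ℝ → ℝ} {A a : ℝ} (hW : Continuous W) (hA : 0 ≤ A)
    (h : ∫ y in a..(a + A + 1), W y ≤ A) : ∃ y ∈ Set.Icc a (a + A + 1), W y ≤ 1 := by
  by_contra! hcon
  have h' : ∫ _ in a..(a + A + 1), (1 : ℝ) ≤ ∫ y in a..(a + A + 1), W y :=
    intervalIntegral.integral_mono_on (by linarith) intervalIntegrable_const
      (hW.intervalIntegrable _ _) (fun y hy => (hcon y hy).le)
  simp at h'
  linarith

/-- A nonnegative integrable function with `W'' + c W' ≥ -h`, `h` integrable, is bounded by a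
constant depending only on `c` and on the integrals of `W` and `h`. -/
lemma le_of_integral_le_of_neg_le {W W₁ W₂ h : ℝ → ℝ} {c A B : ℝ} (hc : 0 < c)
    (h₁ : ∀ y, HasDerivAt W (W₁ y) y) (h₂ : ∀ y, HasDerivAt W₁ (W₂ y) y)
    (hW₂ : Continuous W₂) (hW : ∀ y, 0 ≤ W y) (hh : Continuous h)
    (hWA : ∀ a b, a ≤ b → ∫ y in a..b, W y ≤ A) (hhB : ∀ a b, a ≤ b → ∫ y in a..b, h y ≤ B)
    (hle : ∀ y, -h y ≤ W₂ y + c * W₁ y) (y : ℝ) :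
    W y ≤ 1 + (B + 1 + c * A) * (A + 1) := by
  have hA : 0 ≤ A := by simpa using hWA 0 0 le_rfl
  have hB : 0 ≤ B := by simpa using hhB 0 0 le_rfl
  have hWc : Continuous W := continuous_iff_continuousAt.2 fun y => (h₁ y).continuousAt
  have hW₁c : Continuous W₁ := continuous_iff_continuousAt.2 fun y => (h₂ y).continuousAt
  have hp : ∀ a b, a ≤ b → W₁ a + c * W a - B ≤ W₁ b + c * W b := by
    intro a b hab
    have hftc : ∫ y in a..b, (W₂ y + c * W₁ y) = (W₁ b + c * W b) - (W₁ a + c * W a) :=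
      intervalIntegral.integral_eq_sub_of_hasDerivAt
        (fun y _ => (h₂ y).add ((h₁ y).const_mul c))
        ((hW₂.add (continuous_const.mul hW₁c)).intervalIntegrable _ _)
    have hmono : ∫ y in a..b, -h y ≤ ∫ y in a..b, (W₂ y + c * W₁ y) :=
      intervalIntegral.integral_mono_on hab (hh.neg.intervalIntegrable _ _)
        ((hW₂.add (continuous_const.mul hW₁c)).intervalIntegrable _ _) (fun y _ => hle y)
    rw [intervalIntegral.integral_neg, hftc] at hmono
    linarith [hhB a b hab]
  have hup : ∀ y, W₁ y ≤ B + 1 + c * A := by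
    intro y
    obtain ⟨t, ht, hWt⟩ := exists_le_one_of_integral_le (a := y + 1) hWc hA
      (hWA _ _ (by linarith))
    have hyt : y + 1 ≤ t := ht.1
    have hftc : ∫ s in y..t, (W₁ s + c * W s) = (W t - W y) + c * ∫ s in y..t, W s := by
      rw [intervalIntegral.integral_add (hW₁c.intervalIntegrable _ _)
        ((hWc.intervalIntegrable _ _).const_mul c),
        intervalIntegral.integral_const_mul,
        intervalIntegral.integral_eq_sub_of_hasDerivAt (fun s _ => h₁ s)
          (hW₁c.intervalIntegrable _ _)]
    have hmono : ∫ _ in y..t, (W₁ y + c * W y - B) ≤ ∫ s in y..t, (W₁ s + c * W s) :=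
      intervalIntegral.integral_mono_on (by linarith) intervalIntegrable_const
        ((hW₁c.add (continuous_const.mul hWc)).intervalIntegrable _ _)
        (fun s hs => hp y s hs.1)
    rw [intervalIntegral.integral_const, smul_eq_mul, hftc] at hmono
    have hcA : c * ∫ s in y..t, W s ≤ c * A := by
      gcongr
      exact hWA _ _ (by linarith)
    have hcA0 : 0 ≤ c * A := by positivity
    have hcW : 0 ≤ c * W y := mul_nonneg hc.le (hW y)
    by_contra! hcon
    have := hW y
    nlinarith
  obtain ⟨t, ht, hWt⟩ := exists_le_one_of_integral_le (a := y - A - 1) hWc hA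
    (hWA _ _ (by linarith))
  have hty : t ≤ y := by linarith [ht.2]
  have h := mul_sub_le_of_hasDerivAt (f := fun y => -W y) (C := -(B + 1 + c * A))
    (fun s => (h₁ s).neg) hty (fun s _ => neg_le_neg (hup s))
  have hlen : y - t ≤ A + 1 := by linarith [ht.1]
  have hmul : (B + 1 + c * A) * (y - t) ≤ (B + 1 + c * A) * (A + 1) := by gcongr
  linarith

end OneDimensional

section Cutoff

/-- A cutoff function on `[-S, S]`, vanishing to second order at `±S`. -/
noncomputable def cutoff (S x : ℝ) : ℝ := (1 - (x / S) ^ 2) ^ 2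

noncomputable def cutoffDeriv (S x : ℝ) : ℝ := -(4 / S) * (x / S) * (1 - (x / S) ^ 2)

noncomputable def cutoffDerivTwo (S x : ℝ) : ℝ := -(4 / S ^ 2) * (1 - 3 * (x / S) ^ 2)

variable {S : ℝ}

lemma hasDerivAt_cutoff (S x : ℝ) : HasDerivAt (cutoff S) (cutoffDeriv S x) x := by
  have h := (((((hasDerivAt_id x).div_const S).pow 2).const_sub 1).pow 2)
  refine h.congr_deriv ?_
  simp [cutoffDeriv]
  ring

lemma hasDerivAt_cutoffDeriv (S x : ℝ) :
    HasDerivAt (cutoffDeriv S) (cutoffDerivTwo S x) x := by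
  have h := (((hasDerivAt_id x).div_const S).const_mul (-(4 / S))).mul
    ((((hasDerivAt_id x).div_const S).pow 2).const_sub 1)
  refine h.congr_deriv ?_
  simp [cutoffDerivTwo]
  ring

@[fun_prop]
lemma continuous_cutoff : Continuous (cutoff S) := by unfold cutoff; fun_prop

@[fun_prop]
lemma continuous_cutoffDeriv : Continuous (cutoffDeriv S) := by unfold cutoffDeriv; fun_prop

@[fun_prop]
lemma continuous_cutoffDerivTwo : Continuous (cutoffDerivTwo S) := by
  unfold cutoffDerivTwo; fun_prop

lemma cutoff_nonneg (S x : ℝ) : 0 ≤ cutoff S x := sq_nonneg _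

lemma div_sq_le_one (hS : 0 < S) {x : ℝ} (hx : x ∈ Set.Icc (-S) S) : (x / S) ^ 2 ≤ 1 := by
  rw [sq_le_one_iff_abs_le_one, abs_div, abs_of_pos hS, div_le_one hS]
  exact abs_le.2 hx

lemma cutoff_le_one (hS : 0 < S) {x : ℝ} (hx : x ∈ Set.Icc (-S) S) : cutoff S x ≤ 1 := by
  have := div_sq_le_one hS hx
  unfold cutoff
  nlinarith [sq_nonneg (x / S)]

lemma abs_cutoffDeriv_le (hS : 0 < S) {x : ℝ} (hx : x ∈ Set.Icc (-S) S) :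
    |cutoffDeriv S x| ≤ 4 / S := by
  have h := div_sq_le_one hS hx
  have h1 : |x / S| ≤ 1 := (sq_le_one_iff_abs_le_one _).1 h
  have h2 : |1 - (x / S) ^ 2| ≤ 1 := by
    rw [abs_le]; constructor <;> nlinarith [sq_nonneg (x / S)]
  unfold cutoffDeriv
  rw [abs_mul, abs_mul, abs_neg, abs_of_pos (by positivity : 0 < 4 / S)]
  calc 4 / S * |x / S| * |1 - (x / S) ^ 2| ≤ 4 / S * 1 * 1 := by gcongr
    _ = 4 / S := by ring

lemma abs_cutoffDerivTwo_le (hS : 1 ≤ S) {x : ℝ} (hx : x ∈ Set.Icc (-S) S) :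
    |cutoffDerivTwo S x| ≤ 8 := by
  have h := div_sq_le_one (by linarith) hx
  have h2 : |1 - 3 * (x / S) ^ 2| ≤ 2 := by
    rw [abs_le]; constructor <;> nlinarith [sq_nonneg (x / S)]
  have h3 : 4 / S ^ 2 ≤ 4 := div_le_self (by norm_num) (one_le_pow₀ hS)
  unfold cutoffDerivTwo
  rw [abs_mul, abs_neg, abs_of_nonneg (by positivity : 0 ≤ 4 / S ^ 2)]
  calc 4 / S ^ 2 * |1 - 3 * (x / S) ^ 2| ≤ 4 * 2 := by gcongr
    _ = 8 := by norm_num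

lemma cutoff_boundary (hS : 0 < S) : cutoff S S = 0 ∧ cutoff S (-S) = 0 := by
  simp [cutoff, neg_div, div_self hS.ne']

lemma cutoffDeriv_boundary (hS : 0 < S) : cutoffDeriv S S = 0 ∧ cutoffDeriv S (-S) = 0 := by
  simp [cutoffDeriv, neg_div, div_self hS.ne']

lemma half_le_cutoff_two_mul (hS : 0 < S) {x : ℝ} (hx : x ∈ Set.Icc (-S) S) :
    1 / 2 ≤ cutoff (2 * S) x := by
  have h := div_sq_le_one hS hx
  have h' : (x / (2 * S)) ^ 2 = (x / S) ^ 2 / 4 := by field_simp; norm_num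
  unfold cutoff
  rw [h']
  nlinarith [sq_nonneg (x / S)]

lemma tendsto_cutoff_atTop (x : ℝ) : Tendsto (fun S => cutoff S x) atTop (nhds 1) := by
  have h : Tendsto (fun S : ℝ => x / S) atTop (nhds 0) :=
    tendsto_const_nhds.div_atTop tendsto_id
  simpa [cutoff] using ((h.pow 2).const_sub 1).pow 2

/-- Integration by parts against the cutoff. -/
lemma integral_cutoff_mul_deriv (hS : 0 < S) {g g' : ℝ → ℝ} (hg : ∀ x, HasDerivAt g (g' x) x)
    (hg' : Continuous g') :
    ∫ x in (-S)..S, cutoff S x * g' x = -∫ x in (-S)..S, cutoffDeriv S x * g x := by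
  rw [intervalIntegral.integral_mul_deriv_eq_deriv_mul (fun x _ => hasDerivAt_cutoff S x)
    (fun x _ => hg x) (continuous_cutoffDeriv.intervalIntegrable _ _)
    (hg'.intervalIntegrable _ _), (cutoff_boundary hS).1, (cutoff_boundary hS).2]
  ring

lemma integral_cutoffDeriv_mul_deriv (hS : 0 < S) {g g' : ℝ → ℝ}
    (hg : ∀ x, HasDerivAt g (g' x) x) (hg' : Continuous g') :
    ∫ x in (-S)..S, cutoffDeriv S x * g' x = -∫ x in (-S)..S, cutoffDerivTwo S x * g x := by
  rw [intervalIntegral.integral_mul_deriv_eq_deriv_mul (fun x _ => hasDerivAt_cutoffDeriv S x)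
    (fun x _ => hg x) (continuous_cutoffDerivTwo.intervalIntegrable _ _)
    (hg'.intervalIntegrable _ _), (cutoffDeriv_boundary hS).1, (cutoffDeriv_boundary hS).2]
  ring

lemma integral_cutoffDerivTwo (hS : 0 < S) : ∫ x in (-S)..S, cutoffDerivTwo S x = 0 := by
  rw [intervalIntegral.integral_eq_sub_of_hasDerivAt (fun x _ => hasDerivAt_cutoffDeriv S x)
    (continuous_cutoffDerivTwo.intervalIntegrable _ _), (cutoffDeriv_boundary hS).1,
    (cutoffDeriv_boundary hS).2, sub_zero]

end Cutoff

section DriftLaplacian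

/-- The operator `Δ + c ∂_y`. -/
noncomputable def driftLaplacian (c : ℝ) (w : ℝ → ℝ → ℝ) (x y : ℝ) : ℝ :=
  pdxx w x y + pdyy w x y + c * pdy w x y

lemma deriv_deriv_nonpos_of_isLocalMax {f f' : ℝ → ℝ} {f'' a : ℝ} (h : IsLocalMax f a)
    (h₁ : ∀ x, HasDerivAt f (f' x) x) (h₂ : HasDerivAt f' f'' a) : f'' ≤ 0 := by
  by_contra! hpos
  have hd : deriv f = f' := funext fun x => (h₁ x).deriv
  have hmin : IsLocalMin f a := isLocalMin_of_deriv_deriv_pos (by rwa [hd, h₂.deriv])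
    h.deriv_eq_zero (h₁ a).continuousAt
  have hconst : f =ᶠ[nhds a] fun _ => f a := by
    filter_upwards [h, hmin] with x hx hx'
    exact le_antisymm hx hx'
  have hd' : f' =ᶠ[nhds a] fun _ => 0 := by
    have := hconst.deriv
    rw [hd] at this
    simpa using this
  have := hd'.deriv_eq
  rw [h₂.deriv] at this
  simp at this
  exact hpos.ne' this

variable {u : ℝ → ℝ → ℝ} {c M : ℝ}

lemma sub_le_of_abs_driftLaplacian_le (hu : ContDiff ℝ 2 (fun p : ℝ × ℝ => u p.1 p.2))
    (hc : 0 ≤ c) (hu1 : ∀ x y, |u x y| ≤ 1) (hM : ∀ x y, |driftLaplacian c u x y| ≤ M)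
    (a b : ℝ) {h : ℝ} (hh : h ∈ Set.Icc (0 : ℝ) 1) :
    u (a + h) b - u (a - h) b ≤ (5 + 4 * c + 2 * M) * h := by
  have hM0 : 0 ≤ M := (abs_nonneg _).trans (hM 0 0)
  set A := 5 + 4 * c + 2 * M with hA
  have hA5 : 5 ≤ A := by linarith
  have hx1 : ContDiff ℝ 1 (fun p : ℝ × ℝ => pdx u p.1 p.2) :=
    contDiff_pdx (n := 2) (m := 1) hu le_rfl
  have hy1 : ContDiff ℝ 1 (fun p : ℝ × ℝ => pdy u p.1 p.2) :=
    contDiff_pdy (n := 2) (m := 1) hu le_rfl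
  have hu' : ContDiff ℝ 1 (fun p : ℝ × ℝ => u p.1 p.2) := hu.of_le (by norm_num)
  let G : ℝ × ℝ → ℝ := fun p =>
    u (a + p.1) p.2 - u (a - p.1) p.2 - A * (p.1 - p.1 ^ 2 / 2) - 2 * (p.2 - b) ^ 2
  have hGc : Continuous G := by
    have h1 : Continuous fun p : ℝ × ℝ => u (a + p.1) p.2 :=
      hu.continuous.comp (f := fun p : ℝ × ℝ => (a + p.1, p.2)) (by fun_prop)
    have h2 : Continuous fun p : ℝ × ℝ => u (a - p.1) p.2 :=
      hu.continuous.comp (f := fun p : ℝ × ℝ => (a - p.1, p.2)) (by fun_prop)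
    fun_prop
  have hK : IsCompact (Set.Icc (0 : ℝ) 1 ×ˢ Set.Icc (b - 1) (b + 1)) :=
    isCompact_Icc.prod isCompact_Icc
  obtain ⟨⟨s, t⟩, ⟨hs, ht⟩, hmax⟩ := hK.exists_isMaxOn
    ⟨(0, b), by simp, by simp⟩ hGc.continuousOn
  simp only at hs ht
  have hle : G (s, t) ≤ 0 := by
    by_contra! hpos
    simp only [G] at hpos
    have hd : u (a + s) t - u (a - s) t ≤ 2 := by
      linarith [(abs_le.1 (hu1 (a + s) t)).2, (abs_le.1 (hu1 (a - s) t)).1]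
    have hs_nonneg : 0 ≤ s - s ^ 2 / 2 := by nlinarith [hs.1, hs.2]
    have hs0 : 0 < s := by
      rcases hs.1.eq_or_lt with h0 | h0
      · subst h0; simp at hpos; nlinarith [sq_nonneg (t - b)]
      · exact h0
    have hs1 : s < 1 := by
      rcases hs.2.eq_or_lt with h0 | h0
      · subst h0; nlinarith [sq_nonneg (t - b)]
      · exact h0
    have hAs : 0 ≤ A * (s - s ^ 2 / 2) := by positivity
    have ht0 : b - 1 < t := by
      rcases ht.1.eq_or_lt with h0 | h0
      · subst h0; nlinarith
      · exact h0
    have ht1 : t < b + 1 := by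
      rcases ht.2.eq_or_lt with h0 | h0
      · subst h0; nlinarith
      · exact h0
    have hmaxs : IsLocalMax (fun s => G (s, t)) s := by
      filter_upwards [Ioo_mem_nhds hs0 hs1] with r hr
      exact hmax (show (r, t) ∈ _ from ⟨⟨hr.1.le, hr.2.le⟩, ht⟩)
    have hmaxt : IsLocalMax (fun t => G (s, t)) t := by
      filter_upwards [Ioo_mem_nhds ht0 ht1] with r hr
      exact hmax (show (s, r) ∈ _ from ⟨hs, ⟨hr.1.le, hr.2.le⟩⟩)
    have hplus : ∀ r, HasDerivAt (fun r : ℝ => a + r) 1 r := fun r =>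
      (hasDerivAt_id r).const_add a
    have hminus : ∀ r, HasDerivAt (fun r : ℝ => a - r) (-1) r := fun r =>
      (hasDerivAt_id r).const_sub a
    have hGs : ∀ r, HasDerivAt (fun s => G (s, t))
        (pdx u (a + r) t + pdx u (a - r) t - A * (1 - r)) r := by
      intro r
      have h1 := (hasDerivAt_pdx hu' (a + r) t).comp r (hplus r)
      have h2 := (hasDerivAt_pdx hu' (a - r) t).comp r (hminus r)
      have h3 := ((hasDerivAt_id r).sub (((hasDerivAt_id r).pow 2).div_const 2)).const_mul A
      refine (((h1.sub h2).sub h3).sub_const (2 * (t - b) ^ 2)).congr_deriv ?_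
      simp
    have hGss : HasDerivAt (fun r => pdx u (a + r) t + pdx u (a - r) t - A * (1 - r))
        (pdxx u (a + s) t - pdxx u (a - s) t + A) s := by
      have h1 := (hasDerivAt_pdx hx1 (a + s) t).comp s (hplus s)
      have h2 := (hasDerivAt_pdx hx1 (a - s) t).comp s (hminus s)
      have h3 := ((hasDerivAt_id s).const_sub 1).const_mul A
      refine ((h1.add h2).sub h3).congr_deriv ?_
      simp [pdxx, pdx]
      ring
    have hGt : ∀ r, HasDerivAt (fun t => G (s, t))
        (pdy u (a + s) r - pdy u (a - s) r - 4 * (r - b)) r := by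
      intro r
      have h3 := (((hasDerivAt_id r).sub_const b).pow 2).const_mul 2
      refine ((((hasDerivAt_pdy hu' (a + s) r).sub (hasDerivAt_pdy hu' (a - s) r)).sub_const
        (A * (s - s ^ 2 / 2))).sub h3).congr_deriv ?_
      simp
      ring
    have hGtt : HasDerivAt (fun r => pdy u (a + s) r - pdy u (a - s) r - 4 * (r - b))
        (pdyy u (a + s) t - pdyy u (a - s) t - 4) t := by
      have h3 := ((hasDerivAt_id t).sub_const b).const_mul 4
      refine (((hasDerivAt_pdy hy1 (a + s) t).sub (hasDerivAt_pdy hy1 (a - s) t)).sub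
        h3).congr_deriv ?_
      simp [pdyy, pdy]
    have e1 := deriv_deriv_nonpos_of_isLocalMax hmaxs hGs hGss
    have e2 := deriv_deriv_nonpos_of_isLocalMax hmaxt hGt hGtt
    have e3 := hmaxt.hasDerivAt_eq_zero (hGt t)
    have l1 := (abs_le.1 (hM (a + s) t)).1
    have l2 := (abs_le.1 (hM (a - s) t)).2
    unfold driftLaplacian at l1 l2
    have e4 : c * pdy u (a + s) t - c * pdy u (a - s) t = c * (4 * (t - b)) := by
      rw [← mul_sub]; congr 1; linarith
    have e5 : c * (t - b) ≤ c * 1 := by gcongr; linarith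
    linarith
  have hfin : G (h, b) ≤ G (s, t) := hmax (show (h, b) ∈ _ from ⟨hh, by simp, by simp⟩)
  simp only [G, sub_self] at hfin hle
  nlinarith [sq_nonneg h]

lemma pdx_le_of_abs_driftLaplacian_le (hu : ContDiff ℝ 2 (fun p : ℝ × ℝ => u p.1 p.2))
    (hc : 0 ≤ c) (hu1 : ∀ x y, |u x y| ≤ 1) (hM : ∀ x y, |driftLaplacian c u x y| ≤ M)
    (a b : ℝ) : pdx u a b ≤ 5 + 4 * c + 2 * M := by
  have hM0 : 0 ≤ M := (abs_nonneg _).trans (hM 0 0)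
  have hu' : ContDiff ℝ 1 (fun p : ℝ × ℝ => u p.1 p.2) := hu.of_le (by norm_num)
  have h1 : HasDerivAt (fun h => u (a + h) b) (pdx u a b) 0 := by
    have := hasDerivAt_pdx hu' (a + 0) b
    simpa using this.comp_const_add a 0
  have h2 : HasDerivAt (fun h => u (a - h) b) (-pdx u a b) 0 := by
    have := hasDerivAt_pdx hu' (a - 0) b
    simpa using this.comp_const_sub a 0
  have h3 := (h1.sub h2).hasDerivWithinAt (s := Set.Ioi 0)
  rw [hasDerivWithinAt_iff_tendsto_slope' (by simp)] at h3
  have h4 : pdx u a b - -pdx u a b ≤ 5 + 4 * c + 2 * M := by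
    refine le_of_tendsto h3 ?_
    filter_upwards [Ioo_mem_nhdsGT (one_pos : (0 : ℝ) < 1)] with h hh
    have := sub_le_of_abs_driftLaplacian_le hu hc hu1 hM a b ⟨hh.1.le, hh.2.le⟩
    rw [slope_def_field]
    simp only [Pi.sub_apply, add_zero, sub_zero, sub_self]
    rwa [div_le_iff₀ hh.1]
  linarith

/-- Interior gradient bound in the `x` direction for bounded functions with bounded
`Δu + c u_y`, obtained by comparison for the odd part of `u`. -/
lemma abs_pdx_le_of_abs_driftLaplacian_le (hu : ContDiff ℝ 2 (fun p : ℝ × ℝ => u p.1 p.2))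
    (hc : 0 ≤ c) (hu1 : ∀ x y, |u x y| ≤ 1) (hM : ∀ x y, |driftLaplacian c u x y| ≤ M)
    (a b : ℝ) : |pdx u a b| ≤ 5 + 4 * c + 2 * M := by
  have hneg : ∀ x y, driftLaplacian c (fun x y => -u x y) x y = -driftLaplacian c u x y := by
    intro x y
    simp only [driftLaplacian, pdxx, pdyy, pdx, pdy, deriv.fun_neg]
    ring
  have hpdx : pdx (fun x y => -u x y) a b = -pdx u a b := by simp [pdx, deriv.fun_neg]
  have h := pdx_le_of_abs_driftLaplacian_le (u := fun x y => -u x y) hu.neg hc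
    (fun x y => by simpa using hu1 x y) (fun x y => by rw [hneg, abs_neg]; exact hM x y) a b
  rw [hpdx] at h
  exact abs_le.2 ⟨by linarith, pdx_le_of_abs_driftLaplacian_le hu hc hu1 hM a b⟩

lemma driftLaplacian_sq {g : ℝ → ℝ → ℝ} (hg : ContDiff ℝ 2 (fun p : ℝ × ℝ => g p.1 p.2))
    (c x y : ℝ) : driftLaplacian c (fun x y => g x y ^ 2) x y =
      2 * (pdx g x y ^ 2 + pdy g x y ^ 2) + 2 * g x y * driftLaplacian c g x y := by
  have hg' : ContDiff ℝ 1 (fun p : ℝ × ℝ => g p.1 p.2) := hg.of_le (by norm_num)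
  have hx1 : ContDiff ℝ 1 (fun p : ℝ × ℝ => pdx g p.1 p.2) :=
    contDiff_pdx (n := 2) (m := 1) hg le_rfl
  have hy1 : ContDiff ℝ 1 (fun p : ℝ × ℝ => pdy g p.1 p.2) :=
    contDiff_pdy (n := 2) (m := 1) hg le_rfl
  have ex : ∀ x y, pdx (fun x y => g x y ^ 2) x y = 2 * g x y * pdx g x y := fun x y => by
    refine ((hasDerivAt_pdx hg' x y).pow 2).deriv.trans ?_
    norm_num
  have ey : ∀ x y, pdy (fun x y => g x y ^ 2) x y = 2 * g x y * pdy g x y := fun x y => by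
    refine ((hasDerivAt_pdy hg' x y).pow 2).deriv.trans ?_
    norm_num
  have exx : pdxx (fun x y => g x y ^ 2) x y =
      2 * pdx g x y * pdx g x y + 2 * g x y * pdxx g x y := by
    simp only [pdxx, ex]
    exact (((hasDerivAt_pdx hg' x y).const_mul 2).mul (hasDerivAt_pdx hx1 x y)).deriv
  have eyy : pdyy (fun x y => g x y ^ 2) x y =
      2 * pdy g x y * pdy g x y + 2 * g x y * pdyy g x y := by
    simp only [pdyy, ey]
    exact (((hasDerivAt_pdy hg' x y).const_mul 2).mul (hasDerivAt_pdy hy1 x y)).deriv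
  unfold driftLaplacian
  rw [exx, eyy, ey]
  ring

end DriftLaplacian

section CutoffIntegrals

variable {w : ℝ → ℝ → ℝ} {S : ℝ}

lemma continuous_slice (hw : Continuous fun p : ℝ × ℝ => w p.1 p.2) (y : ℝ) :
    Continuous fun x => w x y :=
  hw.comp (continuous_id.prodMk continuous_const)

lemma continuous_integral_cutoff_mul (hw : Continuous fun p : ℝ × ℝ => w p.1 p.2) (S : ℝ) :
    Continuous fun y => ∫ x in (-S)..S, cutoff S x * w x y :=
  continuous_parametric_integral (g := fun x y => cutoff S x * w x y)
    ((continuous_cutoff.comp continuous_fst).mul hw) _ _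

lemma hasDerivAt_integral_cutoff_mul (hw : ContDiff ℝ 1 (fun p : ℝ × ℝ => w p.1 p.2))
    (S y : ℝ) :
    HasDerivAt (fun y => ∫ x in (-S)..S, cutoff S x * w x y)
      (∫ x in (-S)..S, cutoff S x * pdy w x y) y :=
  hasDerivAt_parametric_integral (g := fun x y => cutoff S x * w x y)
    ((continuous_cutoff.comp continuous_fst).mul hw.continuous)
    ((continuous_cutoff.comp continuous_fst).mul
      (contDiff_pdy (n := 1) (m := 0) hw le_rfl).continuous)
    (fun x y => (hasDerivAt_pdy hw x y).const_mul _) _ _ y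

/-- Testing `Δw + c w_y` against the cutoff in the `x` direction. -/
lemma integral_cutoff_mul_pdyy_add (hS : 0 < S)
    (hw : ContDiff ℝ 2 (fun p : ℝ × ℝ => w p.1 p.2)) (c y : ℝ) :
    (∫ x in (-S)..S, cutoff S x * pdyy w x y) + c * ∫ x in (-S)..S, cutoff S x * pdy w x y =
      (∫ x in (-S)..S, cutoff S x * driftLaplacian c w x y) -
        ∫ x in (-S)..S, cutoffDerivTwo S x * w x y := by
  have hw' : ContDiff ℝ 1 (fun p : ℝ × ℝ => w p.1 p.2) := hw.of_le (by norm_num)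
  have hx1 : ContDiff ℝ 1 (fun p : ℝ × ℝ => pdx w p.1 p.2) :=
    contDiff_pdx (n := 2) (m := 1) hw le_rfl
  have hy1 : ContDiff ℝ 1 (fun p : ℝ × ℝ => pdy w p.1 p.2) :=
    contDiff_pdy (n := 2) (m := 1) hw le_rfl
  have cxx : Continuous fun x => pdxx w x y :=
    continuous_slice (contDiff_pdx (n := 1) (m := 0) hx1 le_rfl).continuous y
  have cyy : Continuous fun x => pdyy w x y :=
    continuous_slice (contDiff_pdy (n := 1) (m := 0) hy1 le_rfl).continuous y
  have cx : Continuous fun x => pdx w x y := continuous_slice hx1.continuous y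
  have cy : Continuous fun x => pdy w x y := continuous_slice hy1.continuous y
  have hparts : ∫ x in (-S)..S, cutoff S x * pdxx w x y =
      ∫ x in (-S)..S, cutoffDerivTwo S x * w x y := by
    refine (integral_cutoff_mul_deriv hS (fun x => hasDerivAt_pdx hx1 x y) cxx).trans ?_
    rw [integral_cutoffDeriv_mul_deriv hS (fun x => hasDerivAt_pdx hw' x y) cx, neg_neg]
  rw [← hparts, ← intervalIntegral.integral_const_mul,
    ← intervalIntegral.integral_add (Continuous.intervalIntegrable (by fun_prop) _ _)
      (Continuous.intervalIntegrable (by fun_prop) _ _),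
    ← intervalIntegral.integral_sub
      (Continuous.intervalIntegrable (by unfold driftLaplacian; fun_prop) _ _)
      (Continuous.intervalIntegrable (by fun_prop) _ _)]
  refine intervalIntegral.integral_congr fun x _ => ?_
  simp only [driftLaplacian]
  ring

end CutoffIntegrals

section Convergence

/-- Dominated convergence for compositions with a bounded function converging pointwise. -/
lemma tendsto_integral_mul_comp {u : ℝ → ℝ → ℝ} {k G : ℝ → ℝ} {l : Filter ℝ}
    [l.IsCountablyGenerated] {σ : ℝ} (hu : Continuous fun p : ℝ × ℝ => u p.1 p.2)
    (hu1 : ∀ x y, |u x y| ≤ 1) (hl : ∀ x, Tendsto (fun y => u x y) l (nhds σ))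
    (hk : Continuous k) (hG : Continuous G) (a b : ℝ) :
    Tendsto (fun y => ∫ x in a..b, k x * G (u x y)) l (nhds (∫ x in a..b, k x * G σ)) := by
  obtain ⟨C, hC⟩ := (isCompact_Icc (a := (-1 : ℝ)) (b := 1)).exists_bound_of_continuousOn
    hG.continuousOn
  refine intervalIntegral.tendsto_integral_filter_of_dominated_convergence
    (fun x => |k x| * C) ?_ ?_ ?_ ?_
  · exact Eventually.of_forall fun y =>
      (hk.mul (hG.comp (continuous_slice hu y))).aestronglyMeasurable
  · refine Eventually.of_forall fun y => Eventually.of_forall fun x _ => ?_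
    rw [norm_mul, Real.norm_eq_abs]
    gcongr
    exact hC _ (abs_le.1 (hu1 x y))
  · exact (hk.abs.mul continuous_const).intervalIntegrable _ _
  · exact Eventually.of_forall fun x _ =>
      ((hG.tendsto σ).comp (hl x)).const_mul (k x)

lemma tendsto_integral_cutoff_mul {g : ℝ → ℝ} (hg : Integrable g) :
    Tendsto (fun S => ∫ x in (-S)..S, cutoff S x * g x) atTop (nhds (∫ x, g x)) := by
  have heq : (fun S => ∫ x, (Set.Ioc (-S) S).indicator (fun x => cutoff S x * g x) x) =ᶠ[atTop]
      fun S => ∫ x in (-S)..S, cutoff S x * g x := by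
    filter_upwards [eventually_ge_atTop 0] with S hS
    rw [integral_indicator measurableSet_Ioc,
      intervalIntegral.integral_of_le (by linarith)]
  refine Tendsto.congr' heq ?_
  refine tendsto_integral_filter_of_dominated_convergence (fun x => ‖g x‖) ?_ ?_ hg.norm ?_
  · exact Eventually.of_forall fun S =>
      (continuous_cutoff.aestronglyMeasurable.mul hg.1).indicator measurableSet_Ioc
  · filter_upwards [eventually_gt_atTop 0] with S hS
    refine Eventually.of_forall fun x => ?_
    by_cases hx : x ∈ Set.Ioc (-S) S
    · rw [Set.indicator_of_mem hx, norm_mul, Real.norm_of_nonneg (cutoff_nonneg S x)]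
      exact mul_le_of_le_one_left (norm_nonneg _) (cutoff_le_one hS (Set.Ioc_subset_Icc_self hx))
    · rw [Set.indicator_of_notMem hx, norm_zero]
      exact norm_nonneg _
  · refine Eventually.of_forall fun x => ?_
    have h : Tendsto (fun S => cutoff S x * g x) atTop (nhds (1 * g x)) :=
      (tendsto_cutoff_atTop x).mul_const _
    rw [one_mul] at h
    refine h.congr' ?_
    filter_upwards [eventually_gt_atTop |x|] with S hS
    obtain ⟨h1, h2⟩ := abs_lt.1 hS
    rw [Set.indicator_of_mem (show x ∈ Set.Ioc (-S) S from ⟨h1, h2.le⟩)]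

lemma integral_le_two_mul_integral_cutoff {g : ℝ → ℝ} (hg : Continuous g) (h0 : ∀ x, 0 ≤ g x)
    {S : ℝ} (hS : 0 < S) :
    ∫ x in (-S)..S, g x ≤ 2 * ∫ x in (-(2 * S))..(2 * S), cutoff (2 * S) x * g x := by
  have hci : Continuous fun x => 2 * (cutoff (2 * S) x * g x) := by fun_prop
  rw [← intervalIntegral.integral_const_mul]
  calc ∫ x in (-S)..S, g x ≤ ∫ x in (-S)..S, 2 * (cutoff (2 * S) x * g x) := by
        refine intervalIntegral.integral_mono_on (by linarith) (hg.intervalIntegrable _ _)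
          (hci.intervalIntegrable _ _) fun x hx => ?_
        nlinarith [half_le_cutoff_two_mul hS hx, h0 x]
    _ ≤ ∫ x in (-(2 * S))..(2 * S), 2 * (cutoff (2 * S) x * g x) := by
        refine intervalIntegral.integral_mono_interval (by linarith) (by linarith) (by linarith)
          (Eventually.of_forall fun x => ?_) (hci.intervalIntegrable _ _)
        have := cutoff_nonneg (2 * S) x
        have := h0 x
        simp only [Pi.zero_apply]
        positivity

/-- A uniform bound on the cutoff integrals of a nonnegative function gives integrability. -/
lemma integrable_of_integral_cutoff_le {g : ℝ → ℝ} (hg : Continuous g) (h0 : ∀ x, 0 ≤ g x)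
    {C : ℝ} (hC : ∀ S, 1 ≤ S → ∫ x in (-S)..S, cutoff S x * g x ≤ C) :
    Integrable g ∧ ∫ x, g x ≤ C := by
  have hint : Integrable g := by
    refine integrable_of_intervalIntegral_norm_bounded (l := atTop) (a := fun S : ℝ => -S)
      (b := fun S => S) (2 * C) (fun S => (hg.integrableOn_Icc).mono_set Set.Ioc_subset_Icc_self)
      tendsto_neg_atTop_atBot tendsto_id ?_
    filter_upwards [eventually_ge_atTop 1] with S hS
    simp only [Real.norm_of_nonneg (h0 _)]
    exact (integral_le_two_mul_integral_cutoff hg h0 (by linarith)).trans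
      (by linarith [hC (2 * S) (by linarith)])
  refine ⟨hint, le_of_tendsto (tendsto_integral_cutoff_mul hint) ?_⟩
  filter_upwards [eventually_ge_atTop 1] with S hS using hC S hS

end Convergence

section Potential

variable {F : ℝ → ℝ}

lemma BalancedDoubleWell.nonneg (hF : BalancedDoubleWell F) {s : ℝ} (hs : |s| ≤ 1) :
    0 ≤ F s := by
  obtain ⟨hC, -, -, -, -, hpos, hneg, h1, h2⟩ := hF
  obtain ⟨hs1, hs2⟩ := abs_le.1 hs
  have hd : Differentiable ℝ F := hC.differentiable (by norm_num)
  rcases le_total s 0 with h | h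
  · have := monotoneOn_of_deriv_nonneg (convex_Icc (-1 : ℝ) 0) hd.continuous.continuousOn
      hd.differentiableOn (fun x hx => by
        rw [interior_Icc] at hx
        exact (hpos x hx).le)
    rw [← h1]
    exact this ⟨le_rfl, by norm_num⟩ ⟨hs1, h⟩ hs1
  · have := antitoneOn_of_deriv_nonpos (convex_Icc (0 : ℝ) 1) hd.continuous.continuousOn
      hd.differentiableOn (fun x hx => by
        rw [interior_Icc] at hx
        exact (hneg x hx).le)
    rw [← h2]
    exact this ⟨h, hs2⟩ ⟨by norm_num, le_rfl⟩ hs2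

lemma BalancedDoubleWell.contDiff_deriv (hF : BalancedDoubleWell F) : ContDiff ℝ 2 (deriv F) :=
  ((contDiff_succ_iff_deriv (n := 2)).1 hF.1).2.2

lemma BalancedDoubleWell.continuous_deriv_deriv (hF : BalancedDoubleWell F) :
    Continuous (deriv (deriv F)) :=
  hF.contDiff_deriv.continuous_deriv (by norm_num)

lemma BalancedDoubleWell.hasDerivAt (hF : BalancedDoubleWell F) (s : ℝ) :
    HasDerivAt F (deriv F s) s :=
  (hF.1.differentiable (by norm_num) s).hasDerivAt

lemma BalancedDoubleWell.hasDerivAt_deriv (hF : BalancedDoubleWell F) (s : ℝ) :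
    HasDerivAt (deriv F) (deriv (deriv F) s) s :=
  (hF.contDiff_deriv.differentiable (by norm_num) s).hasDerivAt

lemma BalancedDoubleWell.exists_bound (hF : BalancedDoubleWell F) :
    ∃ M, ∀ s, |s| ≤ 1 → |deriv F s| ≤ M ∧ |deriv (deriv F) s| ≤ M := by
  obtain ⟨C₁, h₁⟩ := (isCompact_Icc (a := (-1 : ℝ)) (b := 1)).exists_bound_of_continuousOn
    hF.contDiff_deriv.continuous.continuousOn
  obtain ⟨C₂, h₂⟩ := (isCompact_Icc (a := (-1 : ℝ)) (b := 1)).exists_bound_of_continuousOn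
    hF.continuous_deriv_deriv.continuousOn
  exact ⟨max C₁ C₂, fun s hs => ⟨(h₁ s (abs_le.1 hs)).trans (le_max_left _ _),
    (h₂ s (abs_le.1 hs)).trans (le_max_right _ _)⟩⟩

end Potential

section Solution

variable {F : ℝ → ℝ} {c : ℝ} {u : ℝ → ℝ → ℝ}

/-- The integrand of the Hamiltonian. -/
noncomputable def hamiltonianDensity (F : ℝ → ℝ) (u : ℝ → ℝ → ℝ) (x y : ℝ) : ℝ :=
  (1 / 2) * ((pdx u x y) ^ 2 - (pdy u x y) ^ 2) + F (u x y)

/-- The Hamiltonian localized by the cutoff. -/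
noncomputable def localHamiltonian (F : ℝ → ℝ) (u : ℝ → ℝ → ℝ) (S y : ℝ) : ℝ :=
  ∫ x in (-S)..S, cutoff S x * hamiltonianDensity F u x y

lemma IsSolution.contDiff_pdx (hu : IsSolution F c u) :
    ContDiff ℝ 2 (fun p : ℝ × ℝ => pdx u p.1 p.2) :=
  _root_.contDiff_pdx (n := 3) (m := 2) hu.1 le_rfl

lemma IsSolution.contDiff_pdy (hu : IsSolution F c u) :
    ContDiff ℝ 2 (fun p : ℝ × ℝ => pdy u p.1 p.2) :=
  _root_.contDiff_pdy (n := 3) (m := 2) hu.1 le_rfl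

lemma IsSolution.contDiff_two (hu : IsSolution F c u) :
    ContDiff ℝ 2 (fun p : ℝ × ℝ => u p.1 p.2) :=
  hu.1.of_le (by norm_num)

lemma IsSolution.contDiff_one (hu : IsSolution F c u) :
    ContDiff ℝ 1 (fun p : ℝ × ℝ => u p.1 p.2) :=
  hu.1.of_le (by norm_num)

/-- The derivative `u_y` solves the linearized equation. -/
lemma IsSolution.driftLaplacian_pdy (hF : BalancedDoubleWell F) (hu : IsSolution F c u)
    (x y : ℝ) :
    driftLaplacian c (pdy u) x y = deriv (deriv F) (u x y) * pdy u x y := by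
  have hx2 := hu.contDiff_pdx
  have hy2 := hu.contDiff_pdy
  have hxx1 : ContDiff ℝ 1 (fun p : ℝ × ℝ => pdxx u p.1 p.2) :=
    _root_.contDiff_pdx (n := 2) (m := 1) hx2 le_rfl
  have hyy1 : ContDiff ℝ 1 (fun p : ℝ × ℝ => pdyy u p.1 p.2) :=
    _root_.contDiff_pdy (n := 2) (m := 1) hy2 le_rfl
  have hcomm : pdy (pdxx u) x y = pdxx (pdy u) x y := by
    have h1 : pdy (pdx u) = pdx (pdy u) := by
      ext x y; exact pdy_pdx_comm hu.contDiff_two x y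
    have h2 := pdy_pdx_comm hx2 x y
    rw [h1] at h2
    exact h2
  have hL := ((hasDerivAt_pdy hxx1 x y).add (hasDerivAt_pdy hyy1 x y)).add
    ((hasDerivAt_pdy (hy2.of_le (by norm_num)) x y).const_mul c)
  have hR := (hF.hasDerivAt_deriv (u x y)).comp y (hasDerivAt_pdy hu.contDiff_one x y)
  have heq : (fun t => pdxx u x t + pdyy u x t + c * pdy u x t) = deriv F ∘ fun t => u x t :=
    funext fun t => hu.2.1 x t
  rw [← heq] at hR
  have h := hL.unique hR
  rw [hcomm] at h
  exact h

lemma IsSolution.hasDerivAt_hamiltonianDensity (hF : BalancedDoubleWell F)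
    (hu : IsSolution F c u) (x y : ℝ) :
    HasDerivAt (fun y => hamiltonianDensity F u x y)
      ((pdxx u x y * pdy u x y + pdx u x y * pdx (pdy u) x y) + c * pdy u x y ^ 2) y := by
  have hx := hasDerivAt_pdy (hu.contDiff_pdx.of_le (by norm_num)) x y
  have hy := hasDerivAt_pdy (hu.contDiff_pdy.of_le (by norm_num)) x y
  have hF' := (hF.hasDerivAt (u x y)).comp y (hasDerivAt_pdy hu.contDiff_one x y)
  refine ((((hx.pow 2).sub (hy.pow 2)).const_mul (1 / 2)).add hF').congr_deriv ?_
  rw [pdy_pdx_comm hu.contDiff_two, ← hu.2.1 x y]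
  simp only [pdyy, pdy]
  norm_num
  ring

lemma IsSolution.continuous_hamiltonianDensity (hF : BalancedDoubleWell F)
    (hu : IsSolution F c u) :
    Continuous fun p : ℝ × ℝ => hamiltonianDensity F u p.1 p.2 := by
  have h1 := hu.contDiff_pdx.continuous
  have h2 := hu.contDiff_pdy.continuous
  have h3 := hF.1.continuous.comp hu.1.continuous
  exact (continuous_const.mul ((h1.pow 2).sub (h2.pow 2))).add h3

/-- The localized form of the Hamiltonian identity. -/
lemma IsSolution.hasDerivAt_localHamiltonian (hF : BalancedDoubleWell F)
    (hu : IsSolution F c u) {S : ℝ} (hS : 0 < S) (y : ℝ) :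
    HasDerivAt (localHamiltonian F u S)
      (c * (∫ x in (-S)..S, cutoff S x * pdy u x y ^ 2) -
        ∫ x in (-S)..S, cutoffDeriv S x * (pdx u x y * pdy u x y)) y := by
  have hx := hu.contDiff_pdx
  have hy := hu.contDiff_pdy
  have cx := hx.continuous
  have cy := hy.continuous
  have cxx : Continuous fun p : ℝ × ℝ => pdxx u p.1 p.2 :=
    (_root_.contDiff_pdx (n := 2) (m := 1) hx le_rfl).continuous
  have cyx : Continuous fun p : ℝ × ℝ => pdx (pdy u) p.1 p.2 :=
    (_root_.contDiff_pdx (n := 2) (m := 1) hy le_rfl).continuous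
  have hmain := hasDerivAt_parametric_integral
    (g := fun x y => cutoff S x * hamiltonianDensity F u x y)
    (g' := fun x y => cutoff S x *
      ((pdxx u x y * pdy u x y + pdx u x y * pdx (pdy u) x y) + c * pdy u x y ^ 2))
    ((continuous_cutoff.comp continuous_fst).mul (hu.continuous_hamiltonianDensity hF))
    ((continuous_cutoff.comp continuous_fst).mul
      (((cxx.mul cy).add (cx.mul cyx)).add (continuous_const.mul (cy.pow 2))))
    (fun x y => (hu.hasDerivAt_hamiltonianDensity hF x y).const_mul _) (-S) S y
  refine hmain.congr_deriv ?_
  have sx := continuous_slice cx y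
  have sy := continuous_slice cy y
  have sxx := continuous_slice cxx y
  have syx := continuous_slice cyx y
  have hparts := integral_cutoff_mul_deriv hS
    (g := fun x => pdx u x y * pdy u x y)
    (g' := fun x => pdxx u x y * pdy u x y + pdx u x y * pdx (pdy u) x y)
    (fun x => (hasDerivAt_pdx (hx.of_le (by norm_num)) x y).mul
      (hasDerivAt_pdx (hy.of_le (by norm_num)) x y)) (by fun_prop)
  rw [sub_eq_add_neg, ← hparts, ← intervalIntegral.integral_const_mul,
    ← intervalIntegral.integral_add (Continuous.intervalIntegrable (by fun_prop) _ _)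
      (Continuous.intervalIntegrable (by fun_prop) _ _)]
  exact intervalIntegral.integral_congr fun x _ => by ring

lemma IsSolution.localHamiltonian_eq (hF : BalancedDoubleWell F) (hu : IsSolution F c u)
    (S y : ℝ) :
    localHamiltonian F u S y = 1 / 2 * (∫ x in (-S)..S, cutoff S x * pdx u x y ^ 2) -
      1 / 2 * (∫ x in (-S)..S, cutoff S x * pdy u x y ^ 2) +
      ∫ x in (-S)..S, cutoff S x * F (u x y) := by
  have sx := continuous_slice hu.contDiff_pdx.continuous y
  have sy := continuous_slice hu.contDiff_pdy.continuous y
  have cF := hF.1.continuous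
  have su := continuous_slice hu.1.continuous y
  rw [← intervalIntegral.integral_const_mul, ← intervalIntegral.integral_const_mul,
    ← intervalIntegral.integral_sub (Continuous.intervalIntegrable (by fun_prop) _ _)
      (Continuous.intervalIntegrable (by fun_prop) _ _),
    ← intervalIntegral.integral_add (Continuous.intervalIntegrable (by fun_prop) _ _)
      (Continuous.intervalIntegrable (by fun_prop) _ _)]
  refine intervalIntegral.integral_congr fun x _ => ?_
  simp only [hamiltonianDensity]
  ring

lemma integral_cutoff_mul_nonneg {S : ℝ} (hS : 0 < S) {g : ℝ → ℝ} (hg : ∀ x, 0 ≤ g x) :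
    0 ≤ ∫ x in (-S)..S, cutoff S x * g x :=
  intervalIntegral.integral_nonneg (by linarith) fun x _ =>
    mul_nonneg (cutoff_nonneg S x) (hg x)

lemma IsSolution.continuous_flux (hu : IsSolution F c u) (S : ℝ) :
    Continuous fun y => ∫ x in (-S)..S, cutoffDeriv S x * (pdx u x y * pdy u x y) :=
  continuous_parametric_integral (g := fun x y => cutoffDeriv S x * (pdx u x y * pdy u x y))
    ((continuous_cutoffDeriv.comp continuous_fst).mul
      (hu.contDiff_pdx.continuous.mul hu.contDiff_pdy.continuous)) _ _

lemma IsSolution.continuous_integral_cutoff_pdy_sq (hu : IsSolution F c u) (S : ℝ) :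
    Continuous fun y => ∫ x in (-S)..S, cutoff S x * pdy u x y ^ 2 :=
  continuous_integral_cutoff_mul (w := fun x y => pdy u x y ^ 2)
    (hu.contDiff_pdy.continuous.pow 2) S

lemma IsSolution.localHamiltonian_sub (hF : BalancedDoubleWell F)
    (hu : IsSolution F c u) {S : ℝ} (hS : 0 < S) (a b : ℝ) :
    localHamiltonian F u S b - localHamiltonian F u S a =
      c * (∫ y in a..b, ∫ x in (-S)..S, cutoff S x * pdy u x y ^ 2) -
        ∫ y in a..b, ∫ x in (-S)..S, cutoffDeriv S x * (pdx u x y * pdy u x y) := by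
  have hW := hu.continuous_integral_cutoff_pdy_sq S
  have hJ := hu.continuous_flux S
  rw [← intervalIntegral.integral_const_mul, ← intervalIntegral.integral_sub
    ((hW.intervalIntegrable _ _).const_mul c) (hJ.intervalIntegrable _ _)]
  exact (intervalIntegral.integral_eq_sub_of_hasDerivAt
    (fun y _ => hu.hasDerivAt_localHamiltonian hF hS y)
    (((continuous_const.mul hW).sub hJ).intervalIntegrable _ _)).symm

/-- The flux of a monotone solution through the cutoff region is bounded uniformly in `S`. -/
lemma IsSolution.abs_integral_flux_le (hu : IsSolution F c u) {K : ℝ}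
    (hK : ∀ x y, |pdx u x y| ≤ K) {S : ℝ} (hS : 0 < S) {a b : ℝ} (hab : a ≤ b) :
    |∫ y in a..b, ∫ x in (-S)..S, cutoffDeriv S x * (pdx u x y * pdy u x y)| ≤ 16 * K := by
  have hK0 : 0 ≤ K := (abs_nonneg _).trans (hK 0 0)
  have cy := hu.contDiff_pdy.continuous
  have cV : Continuous fun y => ∫ x in (-S)..S, pdy u x y := continuous_parametric_integral cy _ _
  have hflux : ∀ y, |∫ x in (-S)..S, cutoffDeriv S x * (pdx u x y * pdy u x y)| ≤
      4 / S * K * ∫ x in (-S)..S, pdy u x y := by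
    intro y
    rw [← intervalIntegral.integral_const_mul, ← Real.norm_eq_abs]
    refine intervalIntegral.norm_integral_le_of_norm_le (by linarith)
      (Eventually.of_forall fun x hx => ?_)
      (((continuous_slice cy y).intervalIntegrable _ _).const_mul _)
    rw [norm_mul, norm_mul, Real.norm_of_nonneg (hu.2.2.2 x y).le, ← mul_assoc]
    have := (hu.2.2.2 x y).le
    gcongr
    · exact abs_cutoffDeriv_le hS (Set.Ioc_subset_Icc_self hx)
    · exact hK x y
  have hV : ∫ y in a..b, ∫ x in (-S)..S, pdy u x y =
      (∫ x in (-S)..S, u x b) - ∫ x in (-S)..S, u x a :=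
    intervalIntegral.integral_eq_sub_of_hasDerivAt
      (fun y _ => hasDerivAt_parametric_integral hu.1.continuous cy
        (hasDerivAt_pdy hu.contDiff_one) (-S) S y) (cV.intervalIntegrable _ _)
  have hVb : ∀ y, |∫ x in (-S)..S, u x y| ≤ 2 * S := by
    intro y
    have := intervalIntegral.norm_integral_le_of_norm_le_const (a := -S) (b := S) (C := 1)
      (f := fun x => u x y) (fun x _ => hu.2.2.1 x y)
    rw [abs_of_pos (by linarith : 0 < S - -S)] at this
    rw [← Real.norm_eq_abs]
    linarith
  calc |∫ y in a..b, ∫ x in (-S)..S, cutoffDeriv S x * (pdx u x y * pdy u x y)|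
      ≤ ∫ y in a..b, 4 / S * K * ∫ x in (-S)..S, pdy u x y := by
        rw [← Real.norm_eq_abs]
        exact intervalIntegral.norm_integral_le_of_norm_le hab
          (Eventually.of_forall fun y _ => hflux y)
          ((cV.intervalIntegrable _ _).const_mul _)
    _ = 4 / S * K * ((∫ x in (-S)..S, u x b) - ∫ x in (-S)..S, u x a) := by
        rw [intervalIntegral.integral_const_mul, hV]
    _ ≤ 4 / S * K * (4 * S) := by
        gcongr
        linarith [(abs_le.1 (hVb b)).2, (abs_le.1 (hVb a)).1]
    _ = 16 * K := by field_simp; ring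

lemma IsSolution.frequently_abs_localHamiltonian_le (hF : BalancedDoubleWell F)
    (hu : IsSolution F c u) {S : ℝ} (hS : 0 < S) {l : Filter ℝ} [l.IsCountablyGenerated] {σ : ℝ}
    (hσ : σ ^ 2 = 1) (hFσ : F σ = 0) (hFσ' : deriv F σ = 0)
    (hl : ∀ x, Tendsto (fun y => u x y) l (nhds σ))
    (hfreq : ∃ᶠ y in l, (∫ x in (-S)..S, cutoff S x * pdyy (fun x y => u x y ^ 2) x y) +
      c * (∫ x in (-S)..S, cutoff S x * pdy (fun x y => u x y ^ 2) x y) < 1 / 2) :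
    ∃ᶠ y in l, |localHamiltonian F u S y| ≤ 1 := by
  have cu := hu.1.continuous
  have cx := hu.contDiff_pdx.continuous
  have cy := hu.contDiff_pdy.continuous
  have cF := hF.1.continuous
  have cF' := hF.contDiff_deriv.continuous
  have t1 := tendsto_integral_mul_comp (k := cutoff S) (G := fun s => 2 * s * deriv F s) cu
    hu.2.2.1 hl continuous_cutoff (by fun_prop) (-S) S
  have t2 := tendsto_integral_mul_comp (k := cutoffDerivTwo S) (G := fun s => s ^ 2) cu
    hu.2.2.1 hl continuous_cutoffDerivTwo (by fun_prop) (-S) S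
  have t3 := tendsto_integral_mul_comp (k := cutoff S) (G := F) cu
    hu.2.2.1 hl continuous_cutoff cF (-S) S
  simp only [hσ, hFσ, hFσ', mul_zero, mul_one, intervalIntegral.integral_zero,
    integral_cutoffDerivTwo hS] at t1 t2 t3
  have e1 := t1.eventually (Ioo_mem_nhds (by norm_num : (-(1 / 4) : ℝ) < 0)
    (by norm_num : (0 : ℝ) < 1 / 4))
  have e2 := t2.eventually (Ioo_mem_nhds (by norm_num : (-(1 / 4) : ℝ) < 0)
    (by norm_num : (0 : ℝ) < 1 / 4))
  have e3 := t3.eventually (Ioo_mem_nhds (by norm_num : (-(1 / 4) : ℝ) < 0)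
    (by norm_num : (0 : ℝ) < 1 / 4))
  refine (hfreq.and_eventually ((e1.and e2).and e3)).mono ?_
  rintro y ⟨hy, ⟨⟨h1, -⟩, -, h2⟩, h3, h3'⟩
  have su := continuous_slice cu y
  have sx := continuous_slice cx y
  have sy := continuous_slice cy y
  have sF' := cF'.comp su
  have hsq := integral_cutoff_mul_pdyy_add (w := fun x y => u x y ^ 2) hS
    (hu.contDiff_two.pow 2) c y
  have hsplit : ∫ x in (-S)..S, cutoff S x * driftLaplacian c (fun x y => u x y ^ 2) x y =
      2 * (∫ x in (-S)..S, cutoff S x * pdx u x y ^ 2) +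
      2 * (∫ x in (-S)..S, cutoff S x * pdy u x y ^ 2) +
      ∫ x in (-S)..S, cutoff S x * (2 * u x y * deriv F (u x y)) := by
    rw [← intervalIntegral.integral_const_mul, ← intervalIntegral.integral_const_mul,
      ← intervalIntegral.integral_add (Continuous.intervalIntegrable (by fun_prop) _ _)
        (Continuous.intervalIntegrable (by fun_prop) _ _),
      ← intervalIntegral.integral_add (Continuous.intervalIntegrable (by fun_prop) _ _)
        (Continuous.intervalIntegrable (by fun_prop) _ _)]
    refine intervalIntegral.integral_congr fun x _ => ?_
    simp only [driftLaplacian_sq hu.contDiff_two]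
    rw [show driftLaplacian c u x y = deriv F (u x y) from hu.2.1 x y]
    ring
  have hA := integral_cutoff_mul_nonneg hS (g := fun x => pdx u x y ^ 2) fun x => sq_nonneg _
  have hB := integral_cutoff_mul_nonneg hS (g := fun x => pdy u x y ^ 2) fun x => sq_nonneg _
  rw [hu.localHamiltonian_eq hF, abs_le]
  constructor <;> linarith

lemma IsSolution.abs_integral_cutoff_sq_le (hu : IsSolution F c u) {S : ℝ} (hS : 0 < S)
    (y : ℝ) : |∫ x in (-S)..S, cutoff S x * u x y ^ 2| ≤ 2 * S := by
  have h := intervalIntegral.norm_integral_le_of_norm_le_const (a := -S) (b := S) (C := 1)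
    (f := fun x => cutoff S x * u x y ^ 2) (fun x hx => by
      rw [Set.uIoc_of_le (by linarith)] at hx
      have h1 := cutoff_le_one hS (Set.Ioc_subset_Icc_self hx)
      have h2 := (sq_le_one_iff_abs_le_one _).2 (hu.2.2.1 x y)
      rw [Real.norm_of_nonneg (mul_nonneg (cutoff_nonneg S x) (sq_nonneg _))]
      exact mul_le_one₀ h1 (sq_nonneg _) h2)
  rw [abs_of_pos (by linarith : 0 < S - -S)] at h
  rw [← Real.norm_eq_abs]
  linarith

lemma IsTravelingWave.frequently_atTop (hF : BalancedDoubleWell F) (hu : IsTravelingWave F c u)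
    {S : ℝ} (hS : 0 < S) : ∃ᶠ y in atTop, |localHamiltonian F u S y| ≤ 1 := by
  have hw : ContDiff ℝ 2 (fun p : ℝ × ℝ => u p.1 p.2 ^ 2) := hu.1.contDiff_two.pow 2
  refine hu.1.frequently_abs_localHamiltonian_le hF hS (one_pow 2) hF.2.2.2.2.2.2.2.2 hF.2.2.1
    hu.2.1 ?_
  exact frequently_atTop_lt_of_bounded
    (hasDerivAt_integral_cutoff_mul (w := fun x y => u x y ^ 2) (hw.of_le (by norm_num)) S)
    (hasDerivAt_integral_cutoff_mul (w := pdy fun x y => u x y ^ 2)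
      (contDiff_pdy (n := 2) (m := 1) hw le_rfl) S)
    (hu.1.abs_integral_cutoff_sq_le hS) (by norm_num)

lemma IsTravelingWave.frequently_atBot (hF : BalancedDoubleWell F) (hu : IsTravelingWave F c u)
    {S : ℝ} (hS : 0 < S) : ∃ᶠ y in atBot, |localHamiltonian F u S y| ≤ 1 := by
  have hw : ContDiff ℝ 2 (fun p : ℝ × ℝ => u p.1 p.2 ^ 2) := hu.1.contDiff_two.pow 2
  refine hu.1.frequently_abs_localHamiltonian_le hF hS (by norm_num) hF.2.2.2.2.2.2.2.1 hF.2.1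
    hu.2.2 ?_
  exact frequently_atBot_lt_of_bounded
    (hasDerivAt_integral_cutoff_mul (w := fun x y => u x y ^ 2) (hw.of_le (by norm_num)) S)
    (hasDerivAt_integral_cutoff_mul (w := pdy fun x y => u x y ^ 2)
      (contDiff_pdy (n := 2) (m := 1) hw le_rfl) S)
    (hu.1.abs_integral_cutoff_sq_le hS) (by norm_num)

/-- `u_y` is square integrable over the plane, uniformly in the cutoff. -/
lemma IsTravelingWave.integral_pdy_sq_le (hF : BalancedDoubleWell F) (hc : 0 < c)
    (hu : IsTravelingWave F c u) {K : ℝ} (hK : ∀ x y, |pdx u x y| ≤ K) {S : ℝ} (hS : 0 < S)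
    {a b : ℝ} (hab : a ≤ b) :
    c * ∫ y in a..b, ∫ x in (-S)..S, cutoff S x * pdy u x y ^ 2 ≤ 2 + 16 * K := by
  obtain ⟨b', hb', hρb⟩ := (Filter.frequently_atTop.1 (hu.frequently_atTop hF hS)) b
  obtain ⟨a', ha', hρa⟩ := (Filter.frequently_atBot.1 (hu.frequently_atBot hF hS)) a
  have hW := hu.1.continuous_integral_cutoff_pdy_sq S
  have hmono : ∫ y in a..b, ∫ x in (-S)..S, cutoff S x * pdy u x y ^ 2 ≤
      ∫ y in a'..b', ∫ x in (-S)..S, cutoff S x * pdy u x y ^ 2 :=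
    intervalIntegral.integral_mono_interval ha' hab hb'
      (Eventually.of_forall fun y => integral_cutoff_mul_nonneg hS fun x => sq_nonneg _)
      (hW.intervalIntegrable _ _)
  have hid := hu.1.localHamiltonian_sub hF hS a' b'
  have hflux := abs_le.1 (hu.1.abs_integral_flux_le hK hS (ha'.trans (hab.trans hb')))
  have hcm := mul_le_mul_of_nonneg_left hmono hc.le
  linarith [(abs_le.1 hρb).2, (abs_le.1 hρa).1, hflux.1, hflux.2]

lemma IsTravelingWave.localHamiltonian_le (hF : BalancedDoubleWell F) (hc : 0 < c)
    (hu : IsTravelingWave F c u) {K : ℝ} (hK : ∀ x y, |pdx u x y| ≤ K) {S : ℝ} (hS : 0 < S)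
    (y : ℝ) : localHamiltonian F u S y ≤ 3 + 32 * K := by
  obtain ⟨a', ha', hρa⟩ := (Filter.frequently_atBot.1 (hu.frequently_atBot hF hS)) y
  have hid := hu.1.localHamiltonian_sub hF hS a' y
  have hflux := abs_le.1 (hu.1.abs_integral_flux_le hK hS ha')
  have hcm := hu.integral_pdy_sq_le hF hc hK hS ha'
  linarith [(abs_le.1 hρa).2, hflux.1]

/-- `∫ u_y² dx` is bounded uniformly in `y` and in the cutoff. -/
lemma IsTravelingWave.exists_integral_cutoff_pdy_sq_le (hF : BalancedDoubleWell F) (hc : 0 < c)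
    (hu : IsTravelingWave F c u) {K : ℝ} (hK : ∀ x y, |pdx u x y| ≤ K) :
    ∃ C, ∀ S, 1 ≤ S → ∀ y, ∫ x in (-S)..S, cutoff S x * pdy u x y ^ 2 ≤ C := by
  obtain ⟨M, hM⟩ := hF.exists_bound
  have hM0 : 0 ≤ M := (abs_nonneg _).trans (hM 0 (by simp)).1
  set A := (2 + 16 * K) / c with hA
  refine ⟨1 + ((2 * M + 8) * (2 * A) + 1 + c * A) * (A + 1), fun S hS y => ?_⟩
  have hS0 : 0 < S := by linarith
  have hy2 := hu.1.contDiff_pdy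
  have cy := hy2.continuous
  have hw : ContDiff ℝ 2 (fun p : ℝ × ℝ => pdy u p.1 p.2 ^ 2) := hy2.pow 2
  have hw1 : ContDiff ℝ 1 (fun p : ℝ × ℝ => pdy (fun x y => pdy u x y ^ 2) p.1 p.2) :=
    contDiff_pdy (n := 2) (m := 1) hw le_rfl
  have hWA : ∀ S, 0 < S → ∀ a b, a ≤ b →
      ∫ y in a..b, ∫ x in (-S)..S, cutoff S x * pdy u x y ^ 2 ≤ A := fun S hS a b hab => by
    rw [hA, le_div_iff₀' hc]
    exact hu.integral_pdy_sq_le hF hc hK hS hab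
  have hcV : Continuous fun y => ∫ x in (-S)..S, pdy u x y ^ 2 :=
    continuous_parametric_integral (g := fun x y => pdy u x y ^ 2) (cy.pow 2) _ _
  refine le_of_integral_le_of_neg_le (h := fun y => (2 * M + 8) * ∫ x in (-S)..S, pdy u x y ^ 2)
    hc (hasDerivAt_integral_cutoff_mul (w := fun x y => pdy u x y ^ 2)
      (hw.of_le (by norm_num)) S)
    (hasDerivAt_integral_cutoff_mul (w := pdy fun x y => pdy u x y ^ 2) hw1 S)
    (continuous_integral_cutoff_mul (contDiff_pdy (n := 1) (m := 0) hw1 le_rfl).continuous S)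
    (fun y => integral_cutoff_mul_nonneg hS0 fun x => sq_nonneg _)
    (continuous_const.mul hcV) (hWA S hS0) ?_ ?_ y
  · intro a b hab
    rw [intervalIntegral.integral_const_mul]
    have h1 : ∫ y in a..b, ∫ x in (-S)..S, pdy u x y ^ 2 ≤
        ∫ y in a..b, 2 * ∫ x in (-(2 * S))..(2 * S), cutoff (2 * S) x * pdy u x y ^ 2 :=
      intervalIntegral.integral_mono_on hab (hcV.intervalIntegrable _ _)
        (((hu.1.continuous_integral_cutoff_pdy_sq (2 * S)).intervalIntegrable _ _).const_mul 2)
        fun y _ => integral_le_two_mul_integral_cutoff (g := fun x => pdy u x y ^ 2)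
          ((continuous_slice cy y).pow 2) (fun x => sq_nonneg _) hS0
    rw [intervalIntegral.integral_const_mul] at h1
    have h2 := hWA (2 * S) (by linarith) a b hab
    gcongr
    linarith
  · intro y
    have hsq := integral_cutoff_mul_pdyy_add (w := fun x y => pdy u x y ^ 2) hS0 hw c y
    refine le_of_le_of_eq ?_ hsq.symm
    have sy := continuous_slice cy y
    have sL : Continuous fun x => driftLaplacian c (fun x y => pdy u x y ^ 2) x y := by
      have h1 := continuous_slice hw1.continuous y
      have h2 := continuous_slice (contDiff_pdy (f := pdy fun x y => pdy u x y ^ 2)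
        (n := 1) (m := 0) hw1 le_rfl).continuous y
      have h3 := continuous_slice (contDiff_pdx (f := pdx fun x y => pdy u x y ^ 2)
        (n := 1) (m := 0) (contDiff_pdx (f := fun x y => pdy u x y ^ 2)
          (n := 2) (m := 1) hw le_rfl) le_rfl).continuous y
      exact (h3.add h2).add (continuous_const.mul h1)
    rw [← intervalIntegral.integral_const_mul, ← intervalIntegral.integral_neg,
      ← intervalIntegral.integral_sub (Continuous.intervalIntegrable (by fun_prop) _ _)
        (Continuous.intervalIntegrable (by fun_prop) _ _)]
    refine intervalIntegral.integral_mono_on (by linarith)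
      (Continuous.intervalIntegrable (by fun_prop) _ _)
      (Continuous.intervalIntegrable (by fun_prop) _ _) fun x hx => ?_
    rw [driftLaplacian_sq hy2, hu.1.driftLaplacian_pdy hF]
    set v := pdy u x y
    have k0 := cutoff_nonneg S x
    have k1 := cutoff_le_one hS0 hx
    have k2 := (abs_le.1 (abs_cutoffDerivTwo_le hS hx)).2
    have k3 := (abs_le.1 (hM _ (hu.1.2.2.1 x y)).2).1
    have j1 : 0 ≤ cutoff S x * (2 * (pdx (pdy u) x y ^ 2 + pdy (pdy u) x y ^ 2)) := by positivity
    have j2 : cutoff S x * (-M * v ^ 2) ≤ cutoff S x * (deriv (deriv F) (u x y) * v ^ 2) := by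
      gcongr
    have j3 : cutoff S x * (M * v ^ 2) ≤ 1 * (M * v ^ 2) := by gcongr
    have j4 : cutoffDerivTwo S x * v ^ 2 ≤ 8 * v ^ 2 := by gcongr
    linarith

/-- The full energy on horizontal lines is finite and bounded uniformly in `y`. -/
lemma IsTravelingWave.exists_energy_bound (hF : BalancedDoubleWell F) (hc : 0 < c)
    (hu : IsTravelingWave F c u) :
    ∃ C, ∀ y, Integrable (fun x => pdx u x y ^ 2 + pdy u x y ^ 2 + F (u x y)) ∧
      ∫ x, (pdx u x y ^ 2 + pdy u x y ^ 2 + F (u x y)) ≤ C := by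
  obtain ⟨M, hM⟩ := hF.exists_bound
  have hK := abs_pdx_le_of_abs_driftLaplacian_le (M := M) hu.1.contDiff_two hc.le hu.1.2.2.1
    (fun x y => by
      rw [show driftLaplacian c u x y = deriv F (u x y) from hu.1.2.1 x y]
      exact (hM _ (hu.1.2.2.1 x y)).1)
  set K := 5 + 4 * c + 2 * M
  obtain ⟨C, hC⟩ := hu.exists_integral_cutoff_pdy_sq_le hF hc hK
  refine ⟨2 * (3 + 32 * K) + 2 * C, fun y => ?_⟩
  have sx := continuous_slice hu.1.contDiff_pdx.continuous y
  have sy := continuous_slice hu.1.contDiff_pdy.continuous y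
  have cF := hF.1.continuous
  have su := continuous_slice hu.1.1.continuous y
  have hF0 : ∀ x, 0 ≤ F (u x y) := fun x => hF.nonneg (hu.1.2.2.1 x y)
  refine integrable_of_integral_cutoff_le (by fun_prop)
    (fun x => by have := hF0 x; positivity) fun S hS => ?_
  have hS0 : 0 < S := by linarith
  have hsplit : ∫ x in (-S)..S, cutoff S x * (pdx u x y ^ 2 + pdy u x y ^ 2 + F (u x y)) =
      (∫ x in (-S)..S, cutoff S x * pdx u x y ^ 2) +
      (∫ x in (-S)..S, cutoff S x * pdy u x y ^ 2) +
      ∫ x in (-S)..S, cutoff S x * F (u x y) := by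
    rw [← intervalIntegral.integral_add (Continuous.intervalIntegrable (by fun_prop) _ _)
        (Continuous.intervalIntegrable (by fun_prop) _ _),
      ← intervalIntegral.integral_add (Continuous.intervalIntegrable (by fun_prop) _ _)
        (Continuous.intervalIntegrable (by fun_prop) _ _)]
    exact intervalIntegral.integral_congr fun x _ => by ring
  have hρ := hu.localHamiltonian_le hF hc hK hS0 y
  rw [hu.1.localHamiltonian_eq hF] at hρ
  have hW := hC S hS y
  have hFi := integral_cutoff_mul_nonneg hS0 hF0
  rw [hsplit]
  linarith

end Solution

/-- The Hamiltonian identity for traveling wave solutions (Lemma 2.5):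
`ρ(y) - ρ(y₀) = c ∫_{y₀}^{y} ∫_ℝ uᵧ² dx dt` where
`ρ(y) = ∫_ℝ [ ½(uₓ² - uᵧ²) + F(u) ] dx`. -/
theorem hamiltonian_identity
    (F : ℝ → ℝ) (hF : BalancedDoubleWell F) (c : ℝ) (hc : 0 < c)
    (u : ℝ → ℝ → ℝ) (hu : IsTravelingWave F c u) :
    (∀ y : ℝ, Integrable (fun x =>
      (1 / 2) * ((pdx u x y) ^ 2 - (pdy u x y) ^ 2) + F (u x y))) ∧
    (∀ y₀ y : ℝ,
      (∫ x, ((1 / 2) * ((pdx u x y) ^ 2 - (pdy u x y) ^ 2) + F (u x y))) -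
        (∫ x, ((1 / 2) * ((pdx u x y₀) ^ 2 - (pdy u x y₀) ^ 2) + F (u x y₀))) =
      c * ∫ t in y₀..y, ∫ x, (pdy u x t) ^ 2) := by
  obtain ⟨C, hC⟩ := hu.exists_energy_bound hF hc
  have hsol := hu.1
  have cx := hsol.contDiff_pdx.continuous
  have cy := hsol.contDiff_pdy.continuous
  have hF0 : ∀ x y, 0 ≤ F (u x y) := fun x y => hF.nonneg (hsol.2.2.1 x y)
  have hint : ∀ y, Integrable (fun x => hamiltonianDensity F u x y) := fun y =>
    (hC y).1.mono' (continuous_slice (hsol.continuous_hamiltonianDensity hF) y).aestronglyMeasurable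
      (Eventually.of_forall fun x => by
        rw [Real.norm_eq_abs, abs_le]
        unfold hamiltonianDensity
        have := hF0 x y
        constructor <;> nlinarith [sq_nonneg (pdx u x y), sq_nonneg (pdy u x y)])
  have hint2 : ∀ y, Integrable (fun x => pdy u x y ^ 2) := fun y =>
    (hC y).1.mono' ((continuous_slice cy y).pow 2).aestronglyMeasurable
      (Eventually.of_forall fun x => by
        rw [Real.norm_of_nonneg (sq_nonneg _)]
        linarith [hF0 x y, sq_nonneg (pdx u x y)])
  refine ⟨hint, fun y₀ y => ?_⟩
  have hflux : ∀ S, 0 < S → ∀ t,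
      ‖∫ x in (-S)..S, cutoffDeriv S x * (pdx u x t * pdy u x t)‖ ≤ 4 / S * C := by
    intro S hS t
    have hle : ∀ x ∈ Set.Ioc (-S) S, ‖cutoffDeriv S x * (pdx u x t * pdy u x t)‖ ≤
        4 / S * (pdx u x t ^ 2 + pdy u x t ^ 2 + F (u x t)) := by
      intro x hx
      rw [norm_mul]
      gcongr
      · exact abs_cutoffDeriv_le hS (Set.Ioc_subset_Icc_self hx)
      · rw [Real.norm_eq_abs, abs_le]
        have := hF0 x t
        constructor <;> nlinarith [sq_nonneg (pdx u x t + pdy u x t),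
          sq_nonneg (pdx u x t - pdy u x t)]
    refine (intervalIntegral.norm_integral_le_of_norm_le (by linarith)
      (Eventually.of_forall hle) ((hC t).1.const_mul _).intervalIntegrable).trans ?_
    rw [intervalIntegral.integral_const_mul, intervalIntegral.integral_of_le (by linarith)]
    gcongr
    refine (setIntegral_le_integral (hC t).1 (Eventually.of_forall fun x => ?_)).trans (hC t).2
    have := hF0 x t
    simp only [Pi.zero_apply]
    positivity
  have hlimflux : Tendsto (fun S => ∫ t in y₀..y, ∫ x in (-S)..S,
      cutoffDeriv S x * (pdx u x t * pdy u x t)) atTop (nhds 0) := by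
    have hz : Tendsto (fun S : ℝ => 4 / S * C * |y - y₀|) atTop (nhds 0) := by
      simpa using ((tendsto_const_nhds.div_atTop tendsto_id).mul_const C).mul_const |y - y₀|
    refine squeeze_zero_norm' ?_ hz
    filter_upwards [eventually_gt_atTop 0] with S hS
    exact intervalIntegral.norm_integral_le_of_norm_le_const fun t _ => hflux S hS t
  have hlimW : Tendsto (fun S => ∫ t in y₀..y, ∫ x in (-S)..S, cutoff S x * pdy u x t ^ 2) atTop
      (nhds (∫ t in y₀..y, ∫ x, pdy u x t ^ 2)) := by
    refine intervalIntegral.tendsto_integral_filter_of_dominated_convergence (fun _ => C) ?_ ?_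
      intervalIntegrable_const ?_
    · exact Eventually.of_forall fun S =>
        (hsol.continuous_integral_cutoff_pdy_sq S).aestronglyMeasurable
    · filter_upwards [eventually_gt_atTop 0] with S hS
      refine Eventually.of_forall fun t _ => ?_
      rw [Real.norm_of_nonneg (integral_cutoff_mul_nonneg hS fun x => sq_nonneg _)]
      rw [intervalIntegral.integral_of_le (by linarith)]
      calc ∫ x in Set.Ioc (-S) S, cutoff S x * pdy u x t ^ 2
          ≤ ∫ x in Set.Ioc (-S) S, (pdx u x t ^ 2 + pdy u x t ^ 2 + F (u x t)) := by
            refine setIntegral_mono_on ?_ (hC t).1.integrableOn measurableSet_Ioc fun x hx => ?_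
            · exact ((continuous_cutoff.mul ((continuous_slice cy t).pow 2)).integrableOn_Icc
                ).mono_set Set.Ioc_subset_Icc_self
            · have h1 := mul_le_of_le_one_left (sq_nonneg (pdy u x t))
                (cutoff_le_one hS (Set.Ioc_subset_Icc_self hx))
              linarith [hF0 x t, sq_nonneg (pdx u x t)]
        _ ≤ ∫ x, (pdx u x t ^ 2 + pdy u x t ^ 2 + F (u x t)) := by
            refine setIntegral_le_integral (hC t).1 (Eventually.of_forall fun x => ?_)
            have := hF0 x t
            simp only [Pi.zero_apply]
            positivity
        _ ≤ C := (hC t).2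
    · exact Eventually.of_forall fun t _ => tendsto_integral_cutoff_mul (hint2 t)
  have hlimρ := (tendsto_integral_cutoff_mul (hint y)).sub (tendsto_integral_cutoff_mul (hint y₀))
  have hlim := (hlimW.const_mul c).sub hlimflux
  rw [sub_zero] at hlim
  refine tendsto_nhds_unique (hlimρ.congr' ?_) hlim
  filter_upwards [eventually_gt_atTop 0] with S hS
  exact hsol.localHamiltonian_sub hF hS y₀ y
end
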